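/- arXiv:1605.03995 — 3 statements merged into one kernel-verified Lean document; each statement's English description precedes it below -/
import Mathlib

section
/- As a left module over itself, D decomposes as D ≅ ⨁_{ℓ ∈ Z/4} P(ℓ) ⊕ ⨁_{(i,j) ∈ Λ} (V_{i,j} ⊕ V_{i,j}); in particular D has k-dimension 64. -/
open scoped TensorProduct

/-- Generators of the Drinfeld double `D = D(K^cop)`. -/
inductive DGen : Type
  | a | b | c | d | x | g

open FreeAlgebra in
/-- The defining relations of the algebra `D = D(K^cop)`. -/
inductive DRel (𝕜 : Type) [Field 𝕜] (ξ ν : 𝕜) :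
    FreeAlgebra 𝕜 DGen → FreeAlgebra 𝕜 DGen → Prop
  | ab : DRel 𝕜 ξ ν (ι 𝕜 DGen.a * ι 𝕜 DGen.b) (ξ • (ι 𝕜 DGen.b * ι 𝕜 DGen.a))
  | ac : DRel 𝕜 ξ ν (ι 𝕜 DGen.a * ι 𝕜 DGen.c) (ξ • (ι 𝕜 DGen.c * ι 𝕜 DGen.a))
  | cb : DRel 𝕜 ξ ν (ι 𝕜 DGen.c * ι 𝕜 DGen.b) 0
  | bc : DRel 𝕜 ξ ν (ι 𝕜 DGen.b * ι 𝕜 DGen.c) 0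
  | cd : DRel 𝕜 ξ ν (ι 𝕜 DGen.c * ι 𝕜 DGen.d) (ξ • (ι 𝕜 DGen.d * ι 𝕜 DGen.c))
  | bd : DRel 𝕜 ξ ν (ι 𝕜 DGen.b * ι 𝕜 DGen.d) (ξ • (ι 𝕜 DGen.d * ι 𝕜 DGen.b))
  | adcomm : DRel 𝕜 ξ ν (ι 𝕜 DGen.a * ι 𝕜 DGen.d) (ι 𝕜 DGen.d * ι 𝕜 DGen.a)
  | adone : DRel 𝕜 ξ ν (ι 𝕜 DGen.a * ι 𝕜 DGen.d) 1
  | bsq : DRel 𝕜 ξ ν (ι 𝕜 DGen.b * ι 𝕜 DGen.b) 0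
  | csq : DRel 𝕜 ξ ν (ι 𝕜 DGen.c * ι 𝕜 DGen.c) 0
  | aac : DRel 𝕜 ξ ν (ι 𝕜 DGen.a * ι 𝕜 DGen.a * ι 𝕜 DGen.c) (ι 𝕜 DGen.b)
  | afour : DRel 𝕜 ξ ν (ι 𝕜 DGen.a ^ 4) 1
  | gfour : DRel 𝕜 ξ ν (ι 𝕜 DGen.g ^ 4) 1
  | xsq : DRel 𝕜 ξ ν (ι 𝕜 DGen.x * ι 𝕜 DGen.x) (ι 𝕜 DGen.g * ι 𝕜 DGen.g - 1)
  | gx : DRel 𝕜 ξ ν (ι 𝕜 DGen.g * ι 𝕜 DGen.x) (-(ι 𝕜 DGen.x * ι 𝕜 DGen.g))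
  | ag : DRel 𝕜 ξ ν (ι 𝕜 DGen.a * ι 𝕜 DGen.g) (ι 𝕜 DGen.g * ι 𝕜 DGen.a)
  | bg : DRel 𝕜 ξ ν (ι 𝕜 DGen.b * ι 𝕜 DGen.g) (-(ι 𝕜 DGen.g * ι 𝕜 DGen.b))
  | cg : DRel 𝕜 ξ ν (ι 𝕜 DGen.c * ι 𝕜 DGen.g) (-(ι 𝕜 DGen.g * ι 𝕜 DGen.c))
  | dg : DRel 𝕜 ξ ν (ι 𝕜 DGen.d * ι 𝕜 DGen.g) (ι 𝕜 DGen.g * ι 𝕜 DGen.d)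
  | axr : DRel 𝕜 ξ ν (ι 𝕜 DGen.a * ι 𝕜 DGen.x)
      ((ν * ξ) • (ι 𝕜 DGen.b + ι 𝕜 DGen.g * ι 𝕜 DGen.c) - ξ • (ι 𝕜 DGen.x * ι 𝕜 DGen.a))
  | bxr : DRel 𝕜 ξ ν (ι 𝕜 DGen.b * ι 𝕜 DGen.x)
      ((ν * ξ) • (ι 𝕜 DGen.a - ι 𝕜 DGen.g * ι 𝕜 DGen.d) + ξ • (ι 𝕜 DGen.x * ι 𝕜 DGen.b))
  | cxr : DRel 𝕜 ξ ν (ι 𝕜 DGen.c * ι 𝕜 DGen.x)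
      ((ν * ξ) • (ι 𝕜 DGen.d - ι 𝕜 DGen.g * ι 𝕜 DGen.a) - ξ • (ι 𝕜 DGen.x * ι 𝕜 DGen.c))
  | dxr : DRel 𝕜 ξ ν (ι 𝕜 DGen.d * ι 𝕜 DGen.x)
      ((ν * ξ) • (ι 𝕜 DGen.c + ι 𝕜 DGen.g * ι 𝕜 DGen.b) + ξ • (ι 𝕜 DGen.x * ι 𝕜 DGen.d))

/-- The Drinfeld double `D = D(K^cop)`, presented by generators and relations. -/
abbrev DAlg (𝕜 : Type) [Field 𝕜] (ξ ν : 𝕜) : Type := RingQuot (DRel 𝕜 ξ ν)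

variable (𝕜 : Type) [Field 𝕜] (ξ ν : 𝕜)

/-- The generator `a` of `D`. -/
noncomputable def gA : DAlg 𝕜 ξ ν := RingQuot.mkAlgHom 𝕜 (DRel 𝕜 ξ ν) (FreeAlgebra.ι 𝕜 DGen.a)
/-- The generator `b` of `D`. -/
noncomputable def gB : DAlg 𝕜 ξ ν := RingQuot.mkAlgHom 𝕜 (DRel 𝕜 ξ ν) (FreeAlgebra.ι 𝕜 DGen.b)
/-- The generator `c` of `D`. -/
noncomputable def gC : DAlg 𝕜 ξ ν := RingQuot.mkAlgHom 𝕜 (DRel 𝕜 ξ ν) (FreeAlgebra.ι 𝕜 DGen.c)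
/-- The generator `d` of `D`. -/
noncomputable def gD : DAlg 𝕜 ξ ν := RingQuot.mkAlgHom 𝕜 (DRel 𝕜 ξ ν) (FreeAlgebra.ι 𝕜 DGen.d)
/-- The generator `x` of `D`. -/
noncomputable def gX : DAlg 𝕜 ξ ν := RingQuot.mkAlgHom 𝕜 (DRel 𝕜 ξ ν) (FreeAlgebra.ι 𝕜 DGen.x)
/-- The generator `g` of `D`. -/
noncomputable def gG : DAlg 𝕜 ξ ν := RingQuot.mkAlgHom 𝕜 (DRel 𝕜 ξ ν) (FreeAlgebra.ι 𝕜 DGen.g)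

variable {𝕜 ξ ν}
variable {V W : Type} [AddCommGroup V] [Module 𝕜 V] [AddCommGroup W] [Module 𝕜 W]

/-- A `𝕜`-subspace is invariant under a representation of `D`. -/
def DInvariant (ρ : DAlg 𝕜 ξ ν →ₐ[𝕜] Module.End 𝕜 V) (U : Submodule 𝕜 V) : Prop :=
  ∀ z : DAlg 𝕜 ξ ν, ∀ w ∈ U, ρ z w ∈ U

/-- A representation of `D` is simple (the corresponding `D`-module is simple). -/
def DSimpleRep (ρ : DAlg 𝕜 ξ ν →ₐ[𝕜] Module.End 𝕜 V) : Prop :=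
  Nontrivial V ∧ ∀ U : Submodule 𝕜 V, DInvariant ρ U → U = ⊥ ∨ U = ⊤

/-- A representation of `D` is indecomposable. -/
def DIndecRep (ρ : DAlg 𝕜 ξ ν →ₐ[𝕜] Module.End 𝕜 V) : Prop :=
  Nontrivial V ∧ ∀ U₁ U₂ : Submodule 𝕜 V, DInvariant ρ U₁ → DInvariant ρ U₂ →
    IsCompl U₁ U₂ → U₁ = ⊥ ∨ U₂ = ⊥

/-- The vector `v` spans a copy of the character `χ^j` inside a representation of `D`:
the generators act on `v` by the scalars `χ^j(a) = ξ^j`, `χ^j(b) = χ^j(c) = χ^j(x) = 0`,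
`χ^j(d) = ξ^{-j}`, `χ^j(g) = (-1)^j`. -/
def ChiOn (ρ : DAlg 𝕜 ξ ν →ₐ[𝕜] Module.End 𝕜 V) (j : ZMod 4) (v : V) : Prop :=
  ρ (gA 𝕜 ξ ν) v = ξ ^ j.val • v ∧ ρ (gB 𝕜 ξ ν) v = 0 ∧ ρ (gC 𝕜 ξ ν) v = 0 ∧
  ρ (gD 𝕜 ξ ν) v = (ξ ^ j.val)⁻¹ • v ∧ ρ (gX 𝕜 ξ ν) v = 0 ∧
  ρ (gG 𝕜 ξ ν) v = (-1 : 𝕜) ^ j.val • v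

/-- The pair `(e₁, e₂)` realizes the defining action of the module `V_{i,j}`. -/
def VijOn (ρ : DAlg 𝕜 ξ ν →ₐ[𝕜] Module.End 𝕜 V) (i j : ZMod 4) (e₁ e₂ : V) : Prop :=
  ρ (gA 𝕜 ξ ν) e₁ = ξ ^ i.val • e₁ ∧ ρ (gA 𝕜 ξ ν) e₂ = ξ ^ (i.val + 3) • e₂ ∧
  ρ (gB 𝕜 ξ ν) e₁ = 0 ∧ ρ (gB 𝕜 ξ ν) e₂ = (-1 : 𝕜) ^ i.val • e₁ ∧
  ρ (gC 𝕜 ξ ν) e₁ = 0 ∧ ρ (gC 𝕜 ξ ν) e₂ = e₁ ∧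
  ρ (gD 𝕜 ξ ν) e₁ = (ξ ^ i.val)⁻¹ • e₁ ∧ ρ (gD 𝕜 ξ ν) e₂ = (ξ * (ξ ^ i.val)⁻¹) • e₂ ∧
  ρ (gG 𝕜 ξ ν) e₁ = ξ ^ j.val • e₁ ∧ ρ (gG 𝕜 ξ ν) e₂ = ξ ^ (j.val + 2) • e₂ ∧
  ρ (gX 𝕜 ξ ν) e₁ = (ν * ξ * (ξ ^ (3 * i.val) - ξ ^ (i.val + j.val))) • e₂ ∧
  ρ (gX 𝕜 ξ ν) e₂ = (ν * ξ / 2 * (ξ ^ i.val + ξ ^ (3 * i.val + j.val))) • e₁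

/-- The tuple `p` realizes the defining action of the module `P(ℓ) = P ⊗ k_{χ^ℓ}`
(`P = P(0)` being the projective cover of the trivial module). -/
def POn (ρ : DAlg 𝕜 ξ ν →ₐ[𝕜] Module.End 𝕜 V) (ℓ : ZMod 4) (p : Fin 4 → V) : Prop :=
  ρ (gA 𝕜 ξ ν) (p 0) = ξ ^ ℓ.val • p 0 ∧ ρ (gA 𝕜 ξ ν) (p 1) = -(ξ ^ (ℓ.val + 1)) • p 1 ∧
  ρ (gA 𝕜 ξ ν) (p 2) = ξ ^ (ℓ.val + 1) • p 2 ∧ ρ (gA 𝕜 ξ ν) (p 3) = ξ ^ ℓ.val • p 3 ∧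
  ρ (gB 𝕜 ξ ν) (p 0) = ξ ^ ℓ.val • p 2 ∧ ρ (gB 𝕜 ξ ν) (p 1) = ξ ^ (ℓ.val + 1) • p 3 ∧
  ρ (gB 𝕜 ξ ν) (p 2) = 0 ∧ ρ (gB 𝕜 ξ ν) (p 3) = 0 ∧
  ρ (gC 𝕜 ξ ν) (p 0) = -((ξ ^ ℓ.val)⁻¹) • p 2 ∧
  ρ (gC 𝕜 ξ ν) (p 1) = (ξ * (ξ ^ ℓ.val)⁻¹) • p 3 ∧
  ρ (gC 𝕜 ξ ν) (p 2) = 0 ∧ ρ (gC 𝕜 ξ ν) (p 3) = 0 ∧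
  ρ (gD 𝕜 ξ ν) (p 0) = (ξ ^ ℓ.val)⁻¹ • p 0 ∧
  ρ (gD 𝕜 ξ ν) (p 1) = (ξ * (ξ ^ ℓ.val)⁻¹) • p 1 ∧
  ρ (gD 𝕜 ξ ν) (p 2) = -(ξ * (ξ ^ ℓ.val)⁻¹) • p 2 ∧
  ρ (gD 𝕜 ξ ν) (p 3) = (ξ ^ ℓ.val)⁻¹ • p 3 ∧
  ρ (gX 𝕜 ξ ν) (p 0) = p 1 + ν • p 2 ∧ ρ (gX 𝕜 ξ ν) (p 1) = -(ν • p 3) ∧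
  ρ (gX 𝕜 ξ ν) (p 2) = p 3 ∧ ρ (gX 𝕜 ξ ν) (p 3) = 0 ∧
  ρ (gG 𝕜 ξ ν) (p 0) = (-1 : 𝕜) ^ ℓ.val • p 0 ∧
  ρ (gG 𝕜 ξ ν) (p 1) = -((-1 : 𝕜) ^ ℓ.val) • p 1 ∧
  ρ (gG 𝕜 ξ ν) (p 2) = -((-1 : 𝕜) ^ ℓ.val) • p 2 ∧
  ρ (gG 𝕜 ξ ν) (p 3) = (-1 : 𝕜) ^ ℓ.val • p 3

/-- `ρT` is the tensor product representation of `ρM` and `ρN` on `M ⊗ N`, where the action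
of `D` on a tensor product is given through the coproduct of the Drinfeld double:
`a ↦ a⊗a + c⊗b`, `b ↦ b⊗a + d⊗b`, `c ↦ a⊗c + c⊗d`, `d ↦ b⊗c + d⊗d`, `g ↦ g⊗g`,
`x ↦ x⊗1 + g⊗x`. -/
def TensorRepOn (ρM : DAlg 𝕜 ξ ν →ₐ[𝕜] Module.End 𝕜 V) (ρN : DAlg 𝕜 ξ ν →ₐ[𝕜] Module.End 𝕜 W)
    (ρT : DAlg 𝕜 ξ ν →ₐ[𝕜] Module.End 𝕜 (V ⊗[𝕜] W)) : Prop :=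
  ρT (gA 𝕜 ξ ν) = TensorProduct.map (ρM (gA 𝕜 ξ ν)) (ρN (gA 𝕜 ξ ν)) +
      TensorProduct.map (ρM (gC 𝕜 ξ ν)) (ρN (gB 𝕜 ξ ν)) ∧
  ρT (gB 𝕜 ξ ν) = TensorProduct.map (ρM (gB 𝕜 ξ ν)) (ρN (gA 𝕜 ξ ν)) +
      TensorProduct.map (ρM (gD 𝕜 ξ ν)) (ρN (gB 𝕜 ξ ν)) ∧
  ρT (gC 𝕜 ξ ν) = TensorProduct.map (ρM (gA 𝕜 ξ ν)) (ρN (gC 𝕜 ξ ν)) +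
      TensorProduct.map (ρM (gC 𝕜 ξ ν)) (ρN (gD 𝕜 ξ ν)) ∧
  ρT (gD 𝕜 ξ ν) = TensorProduct.map (ρM (gB 𝕜 ξ ν)) (ρN (gC 𝕜 ξ ν)) +
      TensorProduct.map (ρM (gD 𝕜 ξ ν)) (ρN (gD 𝕜 ξ ν)) ∧
  ρT (gG 𝕜 ξ ν) = TensorProduct.map (ρM (gG 𝕜 ξ ν)) (ρN (gG 𝕜 ξ ν)) ∧
  ρT (gX 𝕜 ξ ν) = TensorProduct.map (ρM (gX 𝕜 ξ ν)) LinearMap.id +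
      TensorProduct.map (ρM (gG 𝕜 ξ ν)) (ρN (gX 𝕜 ξ ν))


section Helpers

variable (𝕜 ξ ν) in
/-- The generators of `D`, as a function. -/
noncomputable def hGen (t : DGen) : DAlg 𝕜 ξ ν :=
  RingQuot.mkAlgHom 𝕜 (DRel 𝕜 ξ ν) (FreeAlgebra.ι 𝕜 t)

lemma h_rel {p q : FreeAlgebra 𝕜 DGen} (h : DRel 𝕜 ξ ν p q) :
    RingQuot.mkAlgHom 𝕜 (DRel 𝕜 ξ ν) p = RingQuot.mkAlgHom 𝕜 (DRel 𝕜 ξ ν) q :=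
  RingQuot.mkAlgHom_rel 𝕜 h

local notation "A" => gA 𝕜 ξ ν
local notation "B" => gB 𝕜 ξ ν
local notation "C" => gC 𝕜 ξ ν
local notation "D" => gD 𝕜 ξ ν
local notation "X" => gX 𝕜 ξ ν
local notation "G" => gG 𝕜 ξ ν

lemma r_ac : A * C = ξ • (C * A) := by
  simpa [gA, gC] using h_rel (DRel.ac (𝕜 := 𝕜) (ξ := ξ) (ν := ν))
lemma r_ad : A * D = 1 := by
  simpa [gA, gD] using h_rel (DRel.adone (𝕜 := 𝕜) (ξ := ξ) (ν := ν))
lemma r_da : D * A = 1 := by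
  rw [← r_ad]
  simpa [gA, gD] using (h_rel (DRel.adcomm (𝕜 := 𝕜) (ξ := ξ) (ν := ν))).symm
lemma r_cc : C * C = 0 := by
  simpa [gC] using h_rel (DRel.csq (𝕜 := 𝕜) (ξ := ξ) (ν := ν))
lemma r_aac : B = A * A * C := by
  simpa [gA, gB, gC] using (h_rel (DRel.aac (𝕜 := 𝕜) (ξ := ξ) (ν := ν))).symm
lemma r_a4 : A ^ 4 = 1 := by
  simpa [gA] using h_rel (DRel.afour (𝕜 := 𝕜) (ξ := ξ) (ν := ν))
lemma r_g4 : G ^ 4 = 1 := by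
  simpa [gG] using h_rel (DRel.gfour (𝕜 := 𝕜) (ξ := ξ) (ν := ν))
lemma r_xx : X * X = G * G - 1 := by
  simpa [gX, gG] using h_rel (DRel.xsq (𝕜 := 𝕜) (ξ := ξ) (ν := ν))
lemma r_gx : G * X = (-1 : 𝕜) • (X * G) := by
  have h := h_rel (DRel.gx (𝕜 := 𝕜) (ξ := ξ) (ν := ν))
  rw [← neg_one_smul 𝕜, map_smul, map_mul, map_mul] at h
  exact h
lemma r_ag : A * G = G * A := by
  simpa [gA, gG] using h_rel (DRel.ag (𝕜 := 𝕜) (ξ := ξ) (ν := ν))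
lemma r_gc : G * C = (-1 : 𝕜) • (C * G) := by
  have h := h_rel (DRel.cg (𝕜 := 𝕜) (ξ := ξ) (ν := ν))
  rw [← neg_one_smul 𝕜, map_smul, map_mul, map_mul] at h
  have h2 : C * G = (-1 : 𝕜) • (G * C) := h
  rw [h2, smul_smul]; simp
lemma r_ax : A * X = (ν * ξ) • (B + G * C) - ξ • (X * A) := by
  simpa [gA, gX, gB, gG, gC] using h_rel (DRel.axr (𝕜 := 𝕜) (ξ := ξ) (ν := ν))
lemma r_cx : C * X = (ν * ξ) • (D - G * A) - ξ • (X * C) := by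
  simpa [gA, gX, gD, gG, gC] using h_rel (DRel.cxr (𝕜 := 𝕜) (ξ := ξ) (ν := ν))

/-- The multiplication table of `D w` where `w` is a common eigenvector of `a`, `g`. -/
structure HTab (l m : 𝕜) (w c y z : DAlg 𝕜 ξ ν) : Prop where
  aw : A * w = l • w
  ac : A * c = (ξ * l) • c
  ay : A * y = (-(ξ * l)) • y
  az : A * z = l • z
  gw : G * w = m • w
  gc : G * c = (-m) • c
  gy : G * y = (-m) • y
  gz : G * z = m • z
  dw : D * w = l ^ 3 • w
  dc : D * c = (-(ξ * l ^ 3)) • c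
  dy : D * y = (ξ * l ^ 3) • y
  dz : D * z = l ^ 3 • z
  cw : C * w = c
  cc : C * c = 0
  cy : C * y = z
  cz : C * z = 0
  bw : B * w = (-l ^ 2) • c
  bc : B * c = 0
  byy : B * y = l ^ 2 • z
  bz : B * z = 0
  xw : X * w = y - (ν * (l + l ^ 3 * m) / 2) • c
  xc : X * c = ξ • z + (ν * (l ^ 3 - m * l)) • w
  xy : X * y = (ν * (l + l ^ 3 * m) / 2 * ξ) • z
  xz : X * z = (ν * ξ * (l ^ 3 - m * l)) • y

lemma d_eig {l l' : 𝕜} {w : DAlg 𝕜 ξ ν} (h : A * w = l • w) (hl : l' * l = 1) :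
    D * w = l' • w := by
  have h1 : D * (A * w) = w := by rw [← mul_assoc, r_da, one_mul]
  rw [h, mul_smul_comm] at h1
  calc D * w = (l' * l) • (D * w) := by rw [hl, one_smul]
    _ = l' • w := by rw [mul_smul, h1]

lemma htab [CharZero 𝕜] {l m : 𝕜} (hξ : ξ ^ 2 = -1) (hν : ν ^ 2 = 2) (hl : l ^ 4 = 1)
    {w : DAlg 𝕜 ξ ν} (aw : A * w = l • w) (gw : G * w = m • w) :
    HTab l m w (C * w) (X * w + (ν * (l + l ^ 3 * m) / 2) • (C * w))
      (C * (X * w + (ν * (l + l ^ 3 * m) / 2) • (C * w))) := by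
  set k : 𝕜 := ν * (l + l ^ 3 * m) / 2 with hk
  have kac : ∀ v : DAlg 𝕜 ξ ν, A * (C * v) = ξ • (C * (A * v)) := fun v => by
    rw [← mul_assoc, r_ac, smul_mul_assoc, mul_assoc]
  have kgc : ∀ v : DAlg 𝕜 ξ ν, G * (C * v) = (-1 : 𝕜) • (C * (G * v)) := fun v => by
    rw [← mul_assoc, r_gc, smul_mul_assoc, mul_assoc]
  have kgx : ∀ v : DAlg 𝕜 ξ ν, G * (X * v) = (-1 : 𝕜) • (X * (G * v)) := fun v => by
    rw [← mul_assoc, r_gx, smul_mul_assoc, mul_assoc]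
  have kcc : ∀ v : DAlg 𝕜 ξ ν, C * (C * v) = 0 := fun v => by
    rw [← mul_assoc, r_cc, zero_mul]
  have kb : ∀ v : DAlg 𝕜 ξ ν, B * v = A * (A * (C * v)) := fun v => by
    rw [r_aac, mul_assoc, mul_assoc]
  have kxx : ∀ v : DAlg 𝕜 ξ ν, X * (X * v) = G * (G * v) - v := fun v => by
    rw [← mul_assoc, r_xx, sub_mul, one_mul, mul_assoc]
  have kax : ∀ v : DAlg 𝕜 ξ ν, A * (X * v) =
      (ν * ξ) • (B * v + G * (C * v)) - ξ • (X * (A * v)) := fun v => by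
    rw [← mul_assoc, r_ax, sub_mul, smul_mul_assoc, smul_mul_assoc, add_mul, mul_assoc, mul_assoc]
  have kcx : ∀ v : DAlg 𝕜 ξ ν, C * (X * v) =
      (ν * ξ) • (D * v - G * (A * v)) - ξ • (X * (C * v)) := fun v => by
    rw [← mul_assoc, r_cx, sub_mul, smul_mul_assoc, smul_mul_assoc, sub_mul, mul_assoc, mul_assoc]
  have dw : D * w = l ^ 3 • w := d_eig aw (by rw [← hl]; ring)
  have ac : A * (C * w) = (ξ * l) • (C * w) := by
    rw [kac, aw, mul_smul_comm, smul_smul]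
  have gc : G * (C * w) = (-m) • (C * w) := by
    rw [kgc, gw, mul_smul_comm, smul_smul, neg_one_mul]
  have bw : B * w = (-l ^ 2) • (C * w) := by
    rw [kb, ac, mul_smul_comm, ac, smul_smul]; congr 1; grind only
  generalize hy : X * w + k • (C * w) = y
  have xw : X * w = y - k • (C * w) := by rw [← hy]; abel
  have ay : A * y = (-(ξ * l)) • y := by
    rw [← hy, mul_add, mul_smul_comm, kax, bw, gc, aw, ac, mul_smul_comm]
    match_scalars <;> grind only
  have gy : G * y = (-m) • y := by
    rw [← hy, mul_add, mul_smul_comm, kgx, gw, gc, mul_smul_comm]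
    match_scalars <;> grind only
  have az : A * (C * y) = l • (C * y) := by
    rw [kac, ay, mul_smul_comm, smul_smul]; congr 1; grind only
  have gz : G * (C * y) = m • (C * y) := by
    rw [kgc, gy, mul_smul_comm]; match_scalars; grind only
  have cxw : C * y = C * (X * w) := by
    rw [← hy, mul_add, mul_smul_comm, kcc]; simp
  have xc : X * (C * w) = ξ • (C * y) + (ν * (l ^ 3 - m * l)) • w := by
    rw [cxw, kcx, dw, aw, mul_smul_comm, gw]
    match_scalars <;> grind only
  have xy : X * y = (k * ξ) • (C * y) := by
    rw [← hy, mul_add, mul_smul_comm, kxx, gw, mul_smul_comm, gw, xc, hy]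
    match_scalars <;> grind only
  have dy : D * y = (ξ * l ^ 3) • y := d_eig ay (by grind only)
  have xz : X * (C * y) = (ν * ξ * (l ^ 3 - m * l)) • y := by
    have h := kcx y
    rw [xy, mul_smul_comm, kcc, dy, ay, mul_smul_comm, gy, smul_zero] at h
    have h2 : X * (C * y) = (-ξ) • ((ν * ξ) • ((ξ * l ^ 3) • y - -(ξ * l) • -m • y))
        + ξ • ((ν * ξ) • ((ξ * l ^ 3) • y - -(ξ * l) • -m • y) - ξ • (X * (C * y))) := by
      match_scalars <;> grind only
    rw [← h] at h2
    rw [h2]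
    match_scalars; grind only
  exact
    { aw := aw, ac := ac, ay := ay, az := az, gw := gw, gc := gc, gy := gy, gz := gz
      dw := dw
      dc := d_eig ac (by grind only)
      dy := dy
      dz := d_eig az (by grind only)
      cw := rfl, cc := kcc _, cy := rfl, cz := kcc _
      bw := bw
      bc := by rw [kb, kcc]; simp
      byy := by rw [kb, az, mul_smul_comm, az, smul_smul]; congr 1; ring
      bz := by rw [kb, kcc]; simp
      xw := xw, xc := xc, xy := xy, xz := xz }

variable (ξ ν) in
/-- Matrices of the generators on the `4`-dimensional module induced from a weight. -/
def hMat (l m : 𝕜) : DGen → Matrix (Fin 4) (Fin 4) 𝕜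
  | .a => !![l, 0, 0, 0; 0, ξ * l, 0, 0; 0, 0, -(ξ * l), 0; 0, 0, 0, l]
  | .b => !![0, 0, 0, 0; -l ^ 2, 0, 0, 0; 0, 0, 0, 0; 0, 0, l ^ 2, 0]
  | .c => !![0, 0, 0, 0; 1, 0, 0, 0; 0, 0, 0, 0; 0, 0, 1, 0]
  | .d => !![l ^ 3, 0, 0, 0; 0, -(ξ * l ^ 3), 0, 0; 0, 0, ξ * l ^ 3, 0; 0, 0, 0, l ^ 3]
  | .x => !![0, ν * (l ^ 3 - m * l), 0, 0; -(ν * (l + l ^ 3 * m) / 2), 0, 0, 0;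
             1, 0, 0, ν * ξ * (l ^ 3 - m * l); 0, ξ, ν * (l + l ^ 3 * m) / 2 * ξ, 0]
  | .g => !![m, 0, 0, 0; 0, -m, 0, 0; 0, 0, -m, 0; 0, 0, 0, m]

set_option maxHeartbeats 4000000 in
lemma hMat_rel [CharZero 𝕜] {l m : 𝕜} (hξ : ξ ^ 2 = -1) (hν : ν ^ 2 = 2) (hl : l ^ 4 = 1)
    (hm : m ^ 4 = 1) ⦃p q : FreeAlgebra 𝕜 DGen⦄ (h : DRel 𝕜 ξ ν p q) :
    FreeAlgebra.lift 𝕜 (hMat ξ ν l m) p = FreeAlgebra.lift 𝕜 (hMat ξ ν l m) q := by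
  cases h <;>
  simp only [map_mul, map_smul, map_neg, map_add, map_sub, map_one, map_zero, map_pow,
    FreeAlgebra.lift_ι_apply, hMat, pow_succ (_ : Matrix (Fin 4) (Fin 4) 𝕜), pow_zero, one_mul] <;>
  ext i j <;> fin_cases i <;> fin_cases j <;>
  simp [Matrix.mul_apply, Fin.sum_univ_four] <;> grind only

/-- The induced representation. -/
noncomputable def hRho [CharZero 𝕜] {l m : 𝕜} (hξ : ξ ^ 2 = -1) (hν : ν ^ 2 = 2) (hl : l ^ 4 = 1)
    (hm : m ^ 4 = 1) : DAlg 𝕜 ξ ν →ₐ[𝕜] Matrix (Fin 4) (Fin 4) 𝕜 :=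
  RingQuot.liftAlgHom 𝕜 ⟨FreeAlgebra.lift 𝕜 (hMat ξ ν l m), hMat_rel hξ hν hl hm⟩

lemma hRho_gen [CharZero 𝕜] {l m : 𝕜} (hξ : ξ ^ 2 = -1) (hν : ν ^ 2 = 2) (hl : l ^ 4 = 1)
    (hm : m ^ 4 = 1) (t : DGen) :
    hRho hξ hν hl hm (RingQuot.mkAlgHom 𝕜 (DRel 𝕜 ξ ν) (FreeAlgebra.ι 𝕜 t)) = hMat ξ ν l m t := by
  rw [hRho, RingQuot.liftAlgHom_mkAlgHom_apply, FreeAlgebra.lift_ι_apply]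

variable (𝕜 ξ ν) in
/-- The weight idempotent for the eigenvalues `l` of `a` and `m` of `g`. -/
noncomputable def hW (l m : 𝕜) : DAlg 𝕜 ξ ν :=
  ((1 / 4 : 𝕜) • (1 + l ^ 3 • A + l ^ 2 • A ^ 2 + l • A ^ 3)) *
  ((1 / 4 : 𝕜) • (1 + m ^ 3 • G + m ^ 2 • G ^ 2 + m • G ^ 3))

lemma hW_a {l m : 𝕜} (hl : l ^ 4 = 1) : A * hW 𝕜 ξ ν l m = l • hW 𝕜 ξ ν l m := by
  rw [hW, ← mul_assoc, ← smul_mul_assoc]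
  congr 1
  have h : A * A ^ 3 = 1 := by rw [← pow_succ']; exact r_a4
  have h2 : A * A ^ 2 = A ^ 3 := by rw [← pow_succ']
  have h3 : A * A = A ^ 2 := (sq _).symm
  simp only [mul_add, mul_smul_comm, mul_one, h, h2, h3]
  match_scalars <;> grind only

lemma hW_g {l m : 𝕜} (hm : m ^ 4 = 1) : G * hW 𝕜 ξ ν l m = m • hW 𝕜 ξ ν l m := by
  have hc : Commute G A := r_ag.symm
  have hc2 : Commute G ((1 / 4 : 𝕜) • (1 + l ^ 3 • A + l ^ 2 • A ^ 2 + l • A ^ 3)) := by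
    refine Commute.smul_right ?_ _
    exact (((Commute.one_right _).add_right (hc.smul_right _)).add_right
      ((hc.pow_right 2).smul_right _)).add_right ((hc.pow_right 3).smul_right _)
  rw [hW, ← mul_assoc, hc2.eq, mul_assoc, ← mul_smul_comm]
  congr 1
  have h : G * G ^ 3 = 1 := by rw [← pow_succ']; exact r_g4
  have h2 : G * G ^ 2 = G ^ 3 := by rw [← pow_succ']
  have h3 : G * G = G ^ 2 := (sq _).symm
  simp only [mul_add, mul_smul_comm, mul_one, h, h2, h3]
  match_scalars <;> grind only

lemma zmod4_sum {M : Type*} [AddCommMonoid M] (f : ZMod 4 → M) :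
    ∑ i, f i = f 0 + f 1 + f 2 + f 3 := Fin.sum_univ_four f

lemma hW_sum [CharZero 𝕜] (hξ : ξ ^ 2 = -1) :
    ∑ i : ZMod 4, ∑ j : ZMod 4, hW 𝕜 ξ ν (ξ ^ i.val) (ξ ^ j.val) = 1 := by
  simp only [hW, ← Finset.mul_sum, ← Finset.sum_mul]
  have v0 : (0 : ZMod 4).val = 0 := rfl
  have v1 : (1 : ZMod 4).val = 1 := rfl
  have v2 : (2 : ZMod 4).val = 2 := rfl
  have v3 : (3 : ZMod 4).val = 3 := rfl
  have key : ∀ t : DAlg 𝕜 ξ ν, ∑ i : ZMod 4, ((1 / 4 : 𝕜) • (1 + (ξ ^ i.val) ^ 3 • t +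
      (ξ ^ i.val) ^ 2 • t ^ 2 + (ξ ^ i.val) • t ^ 3)) = 1 := by
    intro t
    rw [zmod4_sum, v0, v1, v2, v3]
    generalize t ^ 2 = t2
    generalize t ^ 3 = t3
    match_scalars <;> grind only
  rw [key, key, one_mul]

lemma hW_rho [CharZero 𝕜] {l m : 𝕜} (hξ : ξ ^ 2 = -1) (hν : ν ^ 2 = 2) (hl : l ^ 4 = 1)
    (hm : m ^ 4 = 1) (l' m' : 𝕜) (hl' : l' ^ 4 = 1) (hm' : m' ^ 4 = 1) [DecidableEq 𝕜] :
    (hRho (ν := ν) hξ hν hl hm (hW 𝕜 ξ ν l' m')).col 0 =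
      if l = l' ∧ m = m' then Pi.single 0 1 else 0 := by
  have ea : hRho hξ hν hl hm A = _ := hRho_gen hξ hν hl hm DGen.a
  have eg : hRho hξ hν hl hm G = _ := hRho_gen hξ hν hl hm DGen.g
  have key : ∀ s t : 𝕜, s ^ 4 = 1 → t ^ 4 = 1 →
      (1 + t ^ 3 * s + t ^ 2 * s ^ 2 + t * s ^ 3) / 4 = if s = t then 1 else 0 := by
    intro s t hs ht
    split_ifs with h
    · subst h; grind only
    · have : (s - t) * ((1 + t ^ 3 * s + t ^ 2 * s ^ 2 + t * s ^ 3) / 4) = 0 := by grind only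
      exact (mul_eq_zero.mp this).resolve_left (sub_ne_zero.mpr h)
  have e : (hRho (ν := ν) hξ hν hl hm (hW 𝕜 ξ ν l' m')).col 0 =
      Pi.single 0 (((1 + l' ^ 3 * l + l' ^ 2 * l ^ 2 + l' * l ^ 3) / 4) *
        ((1 + m' ^ 3 * m + m' ^ 2 * m ^ 2 + m' * m ^ 3) / 4)) := by
    simp only [hW, map_mul, map_smul, map_add, map_one, map_pow, ea, eg, hMat,
      pow_succ (_ : Matrix (Fin 4) (Fin 4) 𝕜), pow_zero, one_mul]
    ext i
    fin_cases i <;> simp [Matrix.col, Matrix.mul_apply, Fin.sum_univ_four, Matrix.one_apply]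
    grind only
  rw [e, key _ _ hl hl', key _ _ hm hm']
  by_cases h1 : l = l' <;> by_cases h2 : m = m' <;> simp [h1, h2]

lemma root4_pow (hξ : ξ ^ 2 = -1) (i : ZMod 4) : (ξ ^ i.val) ^ 4 = 1 := by
  rw [← pow_mul, mul_comm, pow_mul, show ξ ^ 4 = 1 by grind only, one_pow]

lemma zmod4_cases (i : ZMod 4) : i = 0 ∨ i = 1 ∨ i = 2 ∨ i = 3 := by
  revert i; decide

lemma root4_succ (hξ : ξ ^ 2 = -1) (i : ZMod 4) : ξ ^ (i + 1).val = ξ * ξ ^ i.val := by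
  obtain rfl | rfl | rfl | rfl := zmod4_cases i
  · change ξ ^ 1 = ξ * ξ ^ 0; ring
  · change ξ ^ 2 = ξ * ξ ^ 1; ring
  · change ξ ^ 3 = ξ * ξ ^ 2; ring
  · change ξ ^ 0 = ξ * ξ ^ 3; grind only

lemma root4_two (hξ : ξ ^ 2 = -1) (i : ZMod 4) : ξ ^ (i + 2).val = -ξ ^ i.val := by
  rw [show i + 2 = i + 1 + 1 by ring, root4_succ hξ, root4_succ hξ]; grind only

lemma root4_double (hξ : ξ ^ 2 = -1) (i : ZMod 4) : ξ ^ (2 * i).val = (ξ ^ i.val) ^ 2 := by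
  obtain rfl | rfl | rfl | rfl := zmod4_cases i
  · change ξ ^ 0 = (ξ ^ 0) ^ 2; ring
  · change ξ ^ 2 = (ξ ^ 1) ^ 2; ring
  · change ξ ^ 0 = (ξ ^ 2) ^ 2; grind only
  · change ξ ^ 2 = (ξ ^ 3) ^ 2; grind only

lemma root4_neg [CharZero 𝕜] (i : ZMod 4) (hξ : ξ ^ 2 = -1) :
    (-1 : 𝕜) ^ i.val = (ξ ^ i.val) ^ 2 := by
  rw [← hξ, ← pow_mul, ← pow_mul, mul_comm]

lemma root4_inj (hξ : IsPrimitiveRoot ξ 4) {i j : ZMod 4} (h : ξ ^ i.val = ξ ^ j.val) : i = j :=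
  ZMod.val_injective 4 (hξ.pow_inj (ZMod.val_lt i) (ZMod.val_lt j) h)

lemma root4_sq [CharZero 𝕜] (hξ : IsPrimitiveRoot ξ 4) : ξ ^ 2 = -1 := by
  have h4 := hξ.pow_eq_one
  have h2 : ξ ^ 2 ≠ 1 := hξ.pow_ne_one_of_pos_of_lt (by norm_num) (by norm_num)
  have : (ξ ^ 2 - 1) * (ξ ^ 2 + 1) = 0 := by grind only
  have := (mul_eq_zero.mp this).resolve_left (sub_ne_zero.mpr h2)
  grind only

variable (𝕜 ξ ν) in
/-- The vector `y`. -/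
noncomputable def hY (l m : 𝕜) : DAlg 𝕜 ξ ν :=
  X * hW 𝕜 ξ ν l m + (ν * (l + l ^ 3 * m) / 2) • (C * hW 𝕜 ξ ν l m)

lemma hTab' [CharZero 𝕜] {l m : 𝕜} (hξ : ξ ^ 2 = -1) (hν : ν ^ 2 = 2) (hl : l ^ 4 = 1)
    (hm : m ^ 4 = 1) :
    HTab l m (hW 𝕜 ξ ν l m) (C * hW 𝕜 ξ ν l m) (hY 𝕜 ξ ν l m) (C * hY 𝕜 ξ ν l m) :=
  htab hξ hν hl (hW_a hl) (hW_g hm)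

variable (𝕜 ξ ν) in
/-- Basis of the summand `P(ℓ)`. -/
noncomputable def hP (l : 𝕜) : Fin 4 → DAlg 𝕜 ξ ν :=
  ![hW 𝕜 ξ ν l (l ^ 2), hY 𝕜 ξ ν l (l ^ 2), (-l) • (C * hW 𝕜 ξ ν l (l ^ 2)),
    (-(l * ξ)) • (C * hY 𝕜 ξ ν l (l ^ 2))]

variable (𝕜 ξ ν) in
/-- Basis of the two summands `V_{i,j}`. -/
noncomputable def hE (l m : 𝕜) (s : Fin 2) : Fin 2 → DAlg 𝕜 ξ ν :=
  if s = 0 then ![C * hY 𝕜 ξ ν l m, hY 𝕜 ξ ν l m]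
  else ![C * hW 𝕜 ξ ν (-(ξ * l)) (-m), hW 𝕜 ξ ν (-(ξ * l)) (-m) -
    (ν * ξ * ((-(ξ * l)) ^ 3 - (-m) * (-(ξ * l))))⁻¹ • (C * hY 𝕜 ξ ν (-(ξ * l)) (-m))]

set_option linter.unusedSimpArgs false in
lemma hP_on [CharZero 𝕜] (hξ : ξ ^ 2 = -1) (hν : ν ^ 2 = 2) (n : ZMod 4) :
    POn (Algebra.lmul 𝕜 (DAlg 𝕜 ξ ν)) n (hP 𝕜 ξ ν (ξ ^ n.val)) := by
  have hl := root4_pow hξ n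
  have hn := root4_neg n hξ
  unfold POn
  rw [pow_succ ξ n.val, hn]
  generalize ξ ^ n.val = l at *
  have hi : l⁻¹ = l ^ 3 := by
    have : l ≠ 0 := by rintro rfl; simp at hl
    field_simp; rw [← hl]
  rw [hi]
  have hm : (l ^ 2) ^ 4 = 1 := by grind only
  have T := hTab' (m := l ^ 2) hξ hν hl hm
  have p0 : hP 𝕜 ξ ν l 0 = hW 𝕜 ξ ν l (l ^ 2) := rfl
  have p1 : hP 𝕜 ξ ν l 1 = hY 𝕜 ξ ν l (l ^ 2) := rfl
  have p2 : hP 𝕜 ξ ν l 2 = (-l) • (C * hW 𝕜 ξ ν l (l ^ 2)) := rfl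
  have p3 : hP 𝕜 ξ ν l 3 = (-(l * ξ)) • (C * hY 𝕜 ξ ν l (l ^ 2)) := rfl
  simp only [p0, p1, p2, p3, Algebra.coe_lmul_eq_mul, LinearMap.mul_apply', mul_smul_comm]
  generalize hW 𝕜 ξ ν l (l ^ 2) = w at *
  generalize C * w = c at *
  generalize hY 𝕜 ξ ν l (l ^ 2) = y at *
  generalize C * y = z at *
  simp only [T.aw, T.ac, T.ay, T.az, T.gw, T.gc, T.gy, T.gz, T.dw, T.dc, T.dy, T.dz, T.cw, T.cc,
    T.cy, T.cz, T.bw, T.bc, T.byy, T.bz, T.xw, T.xc, T.xy, T.xz, smul_zero, true_and]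
  clear T p0 p1 p2 p3
  and_intros <;>
  match_scalars <;> grind only

set_option linter.unusedSimpArgs false in
lemma hE_on [CharZero 𝕜] (hξ : ξ ^ 2 = -1) (hν : ν ^ 2 = 2) (i j : ZMod 4)
    (hij : (ξ ^ i.val) ^ 2 ≠ ξ ^ j.val) (s : Fin 2) :
    VijOn (Algebra.lmul 𝕜 (DAlg 𝕜 ξ ν)) i j (hE 𝕜 ξ ν (ξ ^ i.val) (ξ ^ j.val) s 0)
      (hE 𝕜 ξ ν (ξ ^ i.val) (ξ ^ j.val) s 1) := by
  have hl := root4_pow hξ i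
  have hm := root4_pow hξ j
  have hn := root4_neg i hξ
  unfold VijOn
  rw [pow_add ξ i.val, pow_add ξ j.val 2, pow_add ξ i.val, pow_add ξ (3 * i.val), hn,
    mul_comm 3 i.val, pow_mul ξ]
  generalize ξ ^ i.val = l at *
  generalize ξ ^ j.val = m at *
  have hl0 : l ≠ 0 := by rintro rfl; simp at hl
  have hi : l⁻¹ = l ^ 3 := by
    field_simp; rw [← hl]
  rw [hi]
  have hξ0 : ξ ≠ 0 := by rintro rfl; simp at hξ
  have hν0 : ν ≠ 0 := by rintro rfl; simp at hν
  fin_cases s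
  · have T := hTab' (ξ := ξ) (ν := ν) hξ hν hl hm
    simp only [hE, Algebra.coe_lmul_eq_mul, LinearMap.mul_apply', Fin.zero_eta, if_true,
      Matrix.cons_val_zero, Matrix.cons_val_one]
    generalize hW 𝕜 ξ ν l m = w at *
    generalize C * w = c at *
    generalize hY 𝕜 ξ ν l m = y at *
    generalize C * y = z at *
    simp only [T.aw, T.ac, T.ay, T.az, T.gw, T.gc, T.gy, T.gz, T.dw, T.dc, T.dy, T.dz, T.cw, T.cc,
      T.cy, T.cz, T.bw, T.bc, T.byy, T.bz, T.xw, T.xc, T.xy, T.xz, smul_zero, true_and]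
    clear T
    clear hij hl0 hi hn hξ0 hν0
    and_intros <;>
    match_scalars <;> grind only
  · have hl' : (-(ξ * l)) ^ 4 = 1 := by grind only
    have hm' : (-m) ^ 4 = 1 := by grind only
    have T := hTab' (ξ := ξ) (ν := ν) hξ hν hl' hm'
    simp only [hE, Algebra.coe_lmul_eq_mul, LinearMap.mul_apply', Fin.mk_one, one_ne_zero, if_false,
      Matrix.cons_val_zero, Matrix.cons_val_one]
    have hk : (ν * ξ * ((-(ξ * l)) ^ 3 - (-m) * (-(ξ * l)))) ≠ 0 := by
      have : (-(ξ * l)) ^ 3 - (-m) * (-(ξ * l)) = ξ * l * (l ^ 2 - m) := by grind only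
      rw [this]
      have := sub_ne_zero.mpr hij
      positivity
    generalize hq : (ν * ξ * ((-(ξ * l)) ^ 3 - (-m) * (-(ξ * l)))) = q at *
    have hqq : q⁻¹ * q = 1 := inv_mul_cancel₀ hk
    generalize q⁻¹ = r at *
    generalize hW 𝕜 ξ ν (-(ξ * l)) (-m) = w at *
    generalize C * w = c at *
    generalize hY 𝕜 ξ ν (-(ξ * l)) (-m) = y at *
    generalize C * y = z at *
    simp only [mul_sub, mul_smul_comm]
    simp only [T.aw, T.ac, T.ay, T.az, T.gw, T.gc, T.gy, T.gz, T.dw, T.dc, T.dy, T.dz, T.cw, T.cc,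
      T.cy, T.cz, T.bw, T.bc, T.byy, T.bz, T.xw, T.xc, T.xy, T.xz, smul_zero, true_and, sub_zero,
      hq]
    clear T
    have hT : q = -(ν * (l ^ 3 - m * l)) := by rw [← hq]; grind only
    have hT2 : ν * (l ^ 3 - m * l) * r = -1 := by linear_combination -hqq + r * hT
    clear hij hl0 hi hn hξ0 hν0 hk hl' hm' hqq hq
    and_intros <;>
    match_scalars <;> grind only

lemma h_ideal {U : Submodule 𝕜 (DAlg 𝕜 ξ ν)}
    (h : ∀ t : DGen, ∀ w ∈ U, RingQuot.mkAlgHom 𝕜 (DRel 𝕜 ξ ν) (FreeAlgebra.ι 𝕜 t) * w ∈ U)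
    (z w : DAlg 𝕜 ξ ν) (hw : w ∈ U) : z * w ∈ U := by
  obtain ⟨z, rfl⟩ := RingQuot.mkAlgHom_surjective 𝕜 (DRel 𝕜 ξ ν) z
  induction z using FreeAlgebra.induction generalizing w with
  | grade0 r =>
    rw [AlgHom.commutes, ← Algebra.smul_def]
    exact U.smul_mem _ hw
  | grade1 t => exact h t w hw
  | mul p q hp hq => rw [map_mul, mul_assoc]; exact hp _ (hq _ hw)
  | add p q hp hq => rw [map_add, add_mul]; exact U.add_mem (hp _ hw) (hq _ hw)

lemma h_span_ideal {ι : Type} {v : ι → DAlg 𝕜 ξ ν}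
    (h : ∀ i, A * v i ∈ Submodule.span 𝕜 (Set.range v) ∧ B * v i ∈ Submodule.span 𝕜 (Set.range v) ∧
      C * v i ∈ Submodule.span 𝕜 (Set.range v) ∧ D * v i ∈ Submodule.span 𝕜 (Set.range v) ∧
      X * v i ∈ Submodule.span 𝕜 (Set.range v) ∧ G * v i ∈ Submodule.span 𝕜 (Set.range v))
    (z w : DAlg 𝕜 ξ ν) (hw : w ∈ Submodule.span 𝕜 (Set.range v)) :
    z * w ∈ Submodule.span 𝕜 (Set.range v) := by
  refine h_ideal (fun t w hw => ?_) z w hw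
  have : Submodule.span 𝕜 (Set.range v) ≤ (Submodule.span 𝕜 (Set.range v)).comap
      (LinearMap.mulLeft 𝕜 (RingQuot.mkAlgHom 𝕜 (DRel 𝕜 ξ ν) (FreeAlgebra.ι 𝕜 t))) := by
    rw [Submodule.span_le]
    rintro _ ⟨i, rfl⟩
    obtain ⟨h1, h2, h3, h4, h5, h6⟩ := h i
    cases t
    exacts [h1, h2, h3, h4, h5, h6]
  exact this hw

lemma h_P_ideal {n : ZMod 4} {p : Fin 4 → DAlg 𝕜 ξ ν}
    (h : POn (Algebra.lmul 𝕜 (DAlg 𝕜 ξ ν)) n p)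
    (z w : DAlg 𝕜 ξ ν) (hw : w ∈ Submodule.span 𝕜 (Set.range p)) :
    z * w ∈ Submodule.span 𝕜 (Set.range p) := by
  refine h_span_ideal (fun i => ?_) z w hw
  have m : ∀ i, p i ∈ Submodule.span 𝕜 (Set.range p) := fun i => Submodule.subset_span ⟨i, rfl⟩
  have s : ∀ (r : 𝕜) i, r • p i ∈ Submodule.span 𝕜 (Set.range p) :=
    fun r i => Submodule.smul_mem _ _ (m i)
  simp only [POn, Algebra.coe_lmul_eq_mul, LinearMap.mul_apply'] at h
  obtain ⟨a0, a1, a2, a3, b0, b1, b2, b3, c0, c1, c2, c3, d0, d1, d2, d3, x0, x1, x2, x3,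
    g0, g1, g2, g3⟩ := h
  fin_cases i <;>
  simp only [Fin.zero_eta, Fin.mk_one, Fin.reduceFinMk, a0, a1, a2, a3, b0, b1, b2, b3,
    c0, c1, c2, c3, d0, d1, d2, d3, x0, x1, x2, x3, g0, g1, g2, g3, s, m, Submodule.zero_mem,
    Submodule.add_mem, Submodule.neg_mem, and_self]

lemma h_V_ideal {i j : ZMod 4} {e : Fin 2 → DAlg 𝕜 ξ ν}
    (h : VijOn (Algebra.lmul 𝕜 (DAlg 𝕜 ξ ν)) i j (e 0) (e 1))
    (z w : DAlg 𝕜 ξ ν) (hw : w ∈ Submodule.span 𝕜 (Set.range e)) :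
    z * w ∈ Submodule.span 𝕜 (Set.range e) := by
  refine h_span_ideal (fun i => ?_) z w hw
  have m : ∀ i, e i ∈ Submodule.span 𝕜 (Set.range e) := fun i => Submodule.subset_span ⟨i, rfl⟩
  have s : ∀ (r : 𝕜) i, r • e i ∈ Submodule.span 𝕜 (Set.range e) :=
    fun r i => Submodule.smul_mem _ _ (m i)
  simp only [VijOn, Algebra.coe_lmul_eq_mul, LinearMap.mul_apply'] at h
  obtain ⟨a0, a1, b0, b1, c0, c1, d0, d1, g0, g1, x0, x1⟩ := h
  fin_cases i <;>
  simp only [Fin.zero_eta, Fin.mk_one, a0, a1, b0, b1, c0, c1, d0, d1, x0, x1, g0, g1, s, m,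
    Submodule.zero_mem, and_self]

/-- The evaluation map used for the lower bound on the dimension. -/
noncomputable def hPhi [CharZero 𝕜] (hξ : ξ ^ 2 = -1) (hν : ν ^ 2 = 2) :
    DAlg 𝕜 ξ ν →ₗ[𝕜] ((ZMod 4 × ZMod 4) × Fin 4 → 𝕜) where
  toFun z q := hRho hξ hν (root4_pow hξ q.1.1) (root4_pow hξ q.1.2) z q.2 0
  map_add' y z := by ext q; simp
  map_smul' r z := by ext q; simp

lemma hPhi_apply [CharZero 𝕜] (hξ : IsPrimitiveRoot ξ 4) (hν : ν ^ 2 = 2)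
    (u : DAlg 𝕜 ξ ν) (i j : ZMod 4) (q) :
    hPhi (root4_sq hξ) hν (u * hW 𝕜 ξ ν (ξ ^ i.val) (ξ ^ j.val)) q =
      if q.1 = (i, j) then hRho (root4_sq hξ) hν (root4_pow (root4_sq hξ) i)
        (root4_pow (root4_sq hξ) j) u q.2 0 else 0 := by
  classical
  obtain ⟨⟨i', j'⟩, k⟩ := q
  have h := hW_rho (root4_sq hξ) hν (root4_pow (root4_sq hξ) i') (root4_pow (root4_sq hξ) j')
    (ξ ^ i.val) (ξ ^ j.val) (root4_pow (root4_sq hξ) i) (root4_pow (root4_sq hξ) j)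
  have h' := fun t => congrFun h t
  simp only [Matrix.col_apply] at h'
  simp only [hPhi, LinearMap.coe_mk, AddHom.coe_mk, map_mul, Matrix.mul_apply, h']
  have e : (ξ ^ i'.val = ξ ^ i.val ∧ ξ ^ j'.val = ξ ^ j.val) ↔ (i', j') = (i, j) := by
    rw [Prod.mk.injEq]
    exact ⟨fun h => ⟨root4_inj hξ h.1, root4_inj hξ h.2⟩, fun h => by rw [h.1, h.2]; simp⟩
  by_cases hh : (i', j') = (i, j)
  · rw [if_pos (e.mpr hh), if_pos hh]
    obtain ⟨rfl, rfl⟩ := Prod.mk.inj hh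
    simp [Pi.single_apply]
  · rw [if_neg (fun h => hh (e.mp h)), if_neg hh]
    simp

lemma hPhi_surj [CharZero 𝕜] (hξ : IsPrimitiveRoot ξ 4) (hν : ν ^ 2 = 2) :
    Function.Surjective (hPhi (ν := ν) (root4_sq hξ) hν) := by
  classical
  rw [← LinearMap.range_eq_top, eq_top_iff, ← (Pi.basisFun 𝕜 ((ZMod 4 × ZMod 4) × Fin 4)).span_eq,
    Submodule.span_le]
  rintro _ ⟨⟨⟨i, j⟩, k⟩, rfl⟩
  set l := ξ ^ i.val with hl
  set m := ξ ^ j.val with hm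
  have ec := hRho_gen (ν := ν) (root4_sq hξ) hν (root4_pow (root4_sq hξ) i)
        (root4_pow (root4_sq hξ) j) DGen.c
  have ex := hRho_gen (ν := ν) (root4_sq hξ) hν (root4_pow (root4_sq hξ) i)
        (root4_pow (root4_sq hξ) j) DGen.x
  change hRho _ _ _ _ C = _ at ec
  change hRho _ _ _ _ X = _ at ex
  refine ⟨(![1, C, X + (ν * (l + l ^ 3 * m) / 2) • C,
    C * (X + (ν * (l + l ^ 3 * m) / 2) • C)] k) * hW 𝕜 ξ ν l m, ?_⟩
  ext ⟨q, k'⟩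
  rw [hl, hm, hPhi_apply hξ hν, Pi.basisFun_apply, Pi.single_apply]
  by_cases hq : q = (i, j)
  · subst hq
    simp only [if_true, Prod.mk.injEq, true_and]
    fin_cases k <;> fin_cases k' <;>
      simp [ec, ex, hMat, Matrix.mul_apply, Fin.sum_univ_four]
  · simp [hq]

variable (𝕜 ξ ν) in
/-- The 64 basis vectors. -/
noncomputable def hVec :
    (ZMod 4 × Fin 4) ⊕ (({p : ZMod 4 × ZMod 4 // 2 * p.1 ≠ p.2} × Fin 2) × Fin 2) → DAlg 𝕜 ξ ν
  | .inl (n, t) => hP 𝕜 ξ ν (ξ ^ n.val) t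
  | .inr ((q, s), t) => hE 𝕜 ξ ν (ξ ^ q.1.1.val) (ξ ^ q.1.2.val) s t

/-- The summand to which a basis vector belongs. -/
def hPi : (ZMod 4 × Fin 4) ⊕ (({p : ZMod 4 × ZMod 4 // 2 * p.1 ≠ p.2} × Fin 2) × Fin 2) →
    (ZMod 4 ⊕ {p : ZMod 4 × ZMod 4 // 2 * p.1 ≠ p.2} × Fin 2)
  | .inl (n, _) => .inl n
  | .inr (q, _) => .inr q

variable (𝕜 ξ ν) in
/-- The summands. -/
noncomputable def hF (idx : ZMod 4 ⊕ {p : ZMod 4 × ZMod 4 // 2 * p.1 ≠ p.2} × Fin 2) :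
    Submodule 𝕜 (DAlg 𝕜 ξ ν) :=
  Submodule.span 𝕜 (hVec 𝕜 ξ ν '' (hPi ⁻¹' {idx}))

lemma hF_inl (n : ZMod 4) :
    hF 𝕜 ξ ν (.inl n) = Submodule.span 𝕜 (Set.range (hP 𝕜 ξ ν (ξ ^ n.val))) := by
  unfold hF
  congr 1
  ext w
  constructor
  · rintro ⟨⟨n', t⟩ | ⟨q, t⟩, h, rfl⟩
    · obtain rfl : n' = n := Sum.inl.inj h
      exact ⟨t, rfl⟩
    · exact absurd h (by simp [hPi])
  · rintro ⟨t, rfl⟩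
    exact ⟨.inl (n, t), rfl, rfl⟩

lemma hF_inr (q : {p : ZMod 4 × ZMod 4 // 2 * p.1 ≠ p.2}) (s : Fin 2) :
    hF 𝕜 ξ ν (.inr (q, s)) =
      Submodule.span 𝕜 (Set.range (hE 𝕜 ξ ν (ξ ^ q.1.1.val) (ξ ^ q.1.2.val) s)) := by
  unfold hF
  congr 1
  ext w
  constructor
  · rintro ⟨⟨n', t⟩ | ⟨q', t⟩, h, rfl⟩
    · exact absurd h (by simp [hPi])
    · obtain rfl : q' = (q, s) := Sum.inr.inj h
      exact ⟨t, rfl⟩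
  · rintro ⟨t, rfl⟩
    exact ⟨.inr ((q, s), t), rfl, rfl⟩

lemma root4_ne [CharZero 𝕜] (hξ : IsPrimitiveRoot ξ 4) {i j : ZMod 4} (h : 2 * i ≠ j) :
    (ξ ^ i.val) ^ 2 ≠ ξ ^ j.val := by
  rw [← root4_double (root4_sq hξ)]
  exact fun e => h (root4_inj hξ e)

lemma hF_ideal [CharZero 𝕜] (hξ : IsPrimitiveRoot ξ 4) (hν : ν ^ 2 = 2) (idx)
    (z w : DAlg 𝕜 ξ ν) (hw : w ∈ hF 𝕜 ξ ν idx) : z * w ∈ hF 𝕜 ξ ν idx := by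
  obtain n | ⟨q, s⟩ := idx
  · rw [hF_inl] at hw ⊢
    exact h_P_ideal (hP_on (root4_sq hξ) hν n) z w hw
  · rw [hF_inr] at hw ⊢
    exact h_V_ideal (hE_on (root4_sq hξ) hν q.1.1 q.1.2 (root4_ne hξ q.2) s) z w hw

lemma hF_top [CharZero 𝕜] (hξ : IsPrimitiveRoot ξ 4) (hν : ν ^ 2 = 2) :
    ⨆ idx, hF 𝕜 ξ ν idx = ⊤ := by
  have hξ2 := root4_sq hξ
  have hone : (1 : DAlg 𝕜 ξ ν) ∈ ⨆ idx, hF 𝕜 ξ ν idx := by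
    rw [← hW_sum hξ2]
    refine Submodule.sum_mem _ fun i _ => Submodule.sum_mem _ fun j _ => ?_
    by_cases h : 2 * i = j
    · subst h
      rw [root4_double hξ2]
      refine (le_iSup (hF 𝕜 ξ ν) (.inl i)) ?_
      rw [hF_inl]
      exact Submodule.subset_span ⟨0, rfl⟩
    · have h' : 2 * (i + 1) ≠ j + 2 := fun e => h (by
        have : 2 * i + 2 = j + 2 := by rw [← e]; ring
        exact add_right_cancel this)
      have m1 : hE 𝕜 ξ ν (ξ ^ i.val) (ξ ^ j.val) 0 0 ∈ ⨆ idx, hF 𝕜 ξ ν idx := by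
        refine (le_iSup (hF 𝕜 ξ ν) (.inr (⟨(i, j), h⟩, 0))) ?_
        rw [hF_inr]
        exact Submodule.subset_span ⟨0, rfl⟩
      have m2 : hE 𝕜 ξ ν (ξ ^ (i + 1).val) (ξ ^ (j + 2).val) 1 1 ∈ ⨆ idx, hF 𝕜 ξ ν idx := by
        refine (le_iSup (hF 𝕜 ξ ν) (.inr (⟨(i + 1, j + 2), h'⟩, 1))) ?_
        rw [hF_inr]
        exact Submodule.subset_span ⟨1, rfl⟩
      rw [root4_succ hξ2, root4_two hξ2] at m2
      generalize ξ ^ i.val = l at *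
      generalize ξ ^ j.val = m at *
      have e1 : -(ξ * (ξ * l)) = l := by grind only
      simp only [hE, one_ne_zero, if_false, if_true, e1, neg_neg, Matrix.cons_val_zero,
        Matrix.cons_val_one] at m1 m2
      have := Submodule.add_mem _ m2 (Submodule.smul_mem _ ((ν * ξ * (l ^ 3 - m * l))⁻¹) m1)
      rwa [sub_add_cancel] at this
  rw [eq_top_iff]
  intro z _
  have : ⨆ idx, hF 𝕜 ξ ν idx ≤ (⨆ idx, hF 𝕜 ξ ν idx).comap (LinearMap.mulLeft 𝕜 z) :=
    iSup_le fun idx w hw => (le_iSup (hF 𝕜 ξ ν) idx) (hF_ideal hξ hν idx z w hw)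
  have h1 := this hone
  rw [Submodule.mem_comap, LinearMap.mulLeft_apply, mul_one] at h1
  exact h1

lemma hVec_top [CharZero 𝕜] (hξ : IsPrimitiveRoot ξ 4) (hν : ν ^ 2 = 2) :
    ⊤ ≤ Submodule.span 𝕜 (Set.range (hVec 𝕜 ξ ν)) := by
  rw [← hF_top hξ hν]
  exact iSup_le fun idx => Submodule.span_mono (Set.image_subset_range _ _)

lemma h_card : Fintype.card ((ZMod 4 × Fin 4) ⊕
    (({p : ZMod 4 × ZMod 4 // 2 * p.1 ≠ p.2} × Fin 2) × Fin 2)) = 64 := by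
  have : Fintype.card {p : ZMod 4 × ZMod 4 // 2 * p.1 ≠ p.2} = 12 := by decide
  simp only [Fintype.card_sum, Fintype.card_prod, this, Fintype.card_fin, ZMod.card]

lemma h_finrank [CharZero 𝕜] (hξ : IsPrimitiveRoot ξ 4) (hν : ν ^ 2 = 2) :
    Module.finrank 𝕜 (DAlg 𝕜 ξ ν) = 64 := by
  have htop := top_le_iff.mp (hVec_top hξ hν)
  have : Module.Finite 𝕜 (DAlg 𝕜 ξ ν) := ⟨by
    rw [← htop]; exact Submodule.fg_span (Set.finite_range _)⟩
  apply le_antisymm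
  · have := finrank_range_le_card (R := 𝕜) (hVec 𝕜 ξ ν)
    rwa [Set.finrank, htop, finrank_top, h_card] at this
  · have := LinearMap.finrank_le_finrank_of_surjective (hPhi_surj hξ hν)
    simpa [Module.finrank_fintype_fun_eq_card, ZMod.card] using this

lemma hVec_indep [CharZero 𝕜] (hξ : IsPrimitiveRoot ξ 4) (hν : ν ^ 2 = 2) :
    LinearIndependent 𝕜 (hVec 𝕜 ξ ν) :=
  linearIndependent_of_top_le_span_of_card_eq_finrank (hVec_top hξ hν)
    (by rw [h_card, h_finrank hξ hν])

lemma hF_internal [CharZero 𝕜] (hξ : IsPrimitiveRoot ξ 4) (hν : ν ^ 2 = 2) :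
    DirectSum.IsInternal (hF 𝕜 ξ ν) := by
  refine DirectSum.isInternal_submodule_of_iSupIndep_of_iSup_eq_top ?_ (hF_top hξ hν)
  intro idx
  have h := (hVec_indep hξ hν).disjoint_span_image (s := hPi ⁻¹' {idx}) (t := (hPi ⁻¹' {idx})ᶜ)
    disjoint_compl_right
  refine h.mono_right (iSup₂_le fun j hj => Submodule.span_mono (Set.image_mono ?_))
  intro t ht ht'
  exact hj (ht.symm.trans ht')

end Helpers

/-- As a left module over itself, `D` decomposes as
`D ≅ ⨁_{ℓ ∈ ℤ/4} P(ℓ) ⊕ ⨁_{(i,j) ∈ Λ} (V_{i,j} ⊕ V_{i,j})`; in particular `D` has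
`𝕜`-dimension 64. The regular representation is `Algebra.lmul`, i.e. left
multiplication. -/
theorem stmt_13 (𝕜 : Type) [Field 𝕜] [IsAlgClosed 𝕜] [CharZero 𝕜]
    (ξ ν : 𝕜) (hξ : IsPrimitiveRoot ξ 4) (hν : ν ^ 2 = 2) :
    Module.finrank 𝕜 (DAlg 𝕜 ξ ν) = 64 ∧
    ∃ f : (ZMod 4 ⊕ {p : ZMod 4 × ZMod 4 // 2 * p.1 ≠ p.2} × Fin 2) →
        Submodule 𝕜 (DAlg 𝕜 ξ ν),
      -- the summands decompose `D` as an internal direct sum of left ideals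
      DirectSum.IsInternal f ∧
      (∀ idx, ∀ z w : DAlg 𝕜 ξ ν, w ∈ f idx → z * w ∈ f idx) ∧
      -- the summand indexed by `ℓ ∈ ℤ/4` is isomorphic to `P(ℓ)`
      (∀ ℓ : ZMod 4, ∃ p : Fin 4 → DAlg 𝕜 ξ ν, LinearIndependent 𝕜 p ∧
        f (Sum.inl ℓ) = Submodule.span 𝕜 (Set.range p) ∧
        POn (Algebra.lmul 𝕜 (DAlg 𝕜 ξ ν)) ℓ p) ∧
      -- the two summands indexed by `(i,j) ∈ Λ` are isomorphic to `V_{i,j}`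
      (∀ (q : {p : ZMod 4 × ZMod 4 // 2 * p.1 ≠ p.2}) (s : Fin 2),
        ∃ e : Fin 2 → DAlg 𝕜 ξ ν, LinearIndependent 𝕜 e ∧
          f (Sum.inr (q, s)) = Submodule.span 𝕜 (Set.range e) ∧
          VijOn (Algebra.lmul 𝕜 (DAlg 𝕜 ξ ν)) q.1.1 q.1.2 (e 0) (e 1)) := by
  refine ⟨h_finrank hξ hν, hF 𝕜 ξ ν, hF_internal hξ hν, hF_ideal hξ hν, fun n => ?_, fun q s => ?_⟩
  · refine ⟨hP 𝕜 ξ ν (ξ ^ n.val), ?_, hF_inl n, hP_on (root4_sq hξ) hν n⟩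
    exact (hVec_indep hξ hν).comp (fun t => Sum.inl (n, t)) fun t t' h => by simpa using h
  · refine ⟨hE 𝕜 ξ ν (ξ ^ q.1.1.val) (ξ ^ q.1.2.val) s, ?_, hF_inr q s,
      hE_on (root4_sq hξ) hν q.1.1 q.1.2 (root4_ne hξ q.2) s⟩
    exact (hVec_indep hξ hν).comp (fun t => Sum.inr ((q, s), t)) fun t t' h => by simpa using h
end

section
/- For all ℓ, m ∈ Z/4, the k-dimension of Ext¹_D(k_{χ^m}, k_{χ^ℓ}) equals 1 if m ≡ ℓ+1 (mod 4) or m ≡ ℓ−1 (mod 4), and equals 0 otherwise. -/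
open scoped TensorProduct

variable (𝕜 : Type) [Field 𝕜] (ξ ν : 𝕜)

variable {𝕜 ξ ν}
variable {V W : Type} [AddCommGroup V] [Module 𝕜 V] [AddCommGroup W] [Module 𝕜 W]

/-- `f` is the character `χ^j` of `D`. -/
def IsChi (𝕜 : Type) [Field 𝕜] (ξ ν : 𝕜) (f : DAlg 𝕜 ξ ν →ₐ[𝕜] 𝕜) (j : ZMod 4) : Prop :=
  f (gA 𝕜 ξ ν) = ξ ^ j.val ∧ f (gB 𝕜 ξ ν) = 0 ∧ f (gC 𝕜 ξ ν) = 0 ∧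
  f (gD 𝕜 ξ ν) = (ξ ^ j.val)⁻¹ ∧ f (gX 𝕜 ξ ν) = 0 ∧ f (gG 𝕜 ξ ν) = (-1 : 𝕜) ^ j.val

/-- The 1-dimensional left `D`-module `𝕜_{χ}` determined by a character
`χ : D →ₐ[𝕜] 𝕜`, as an object of `ModuleCat D`. -/
noncomputable def chiModuleCat (𝕜 : Type) [Field 𝕜] (ξ ν : 𝕜)
    (f : DAlg 𝕜 ξ ν →ₐ[𝕜] 𝕜) : ModuleCat (DAlg 𝕜 ξ ν) :=
  @ModuleCat.of (DAlg 𝕜 ξ ν) _ 𝕜 _ (Module.compHom 𝕜 f.toRingHom)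

section
open CategoryTheory
theorem finrank_ext_one {k A : Type} [Field k] [Ring A] [Algebra k A]
    {X Y : ModuleCat.{0} A} (P : ProjectiveResolution X) {T : Type} [AddCommGroup T] [Module k T]
    (L : (P.complex.X 1 ⟶ Y) →ₗ[k] T)
    (hs : ∀ t, ∃ φ, P.complex.d 2 1 ≫ φ = 0 ∧ L φ = t)
    (hk : ∀ φ, P.complex.d 2 1 ≫ φ = 0 → L φ = 0 → ∃ ψ, φ = P.complex.d 1 0 ≫ ψ)
    (hk' : ∀ ψ, L (P.complex.d 1 0 ≫ ψ) = 0) :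
    Module.finrank k (((Ext k (ModuleCat.{0} A) 1).obj (Opposite.op X)).obj Y) =
      Module.finrank k T := by
  let K := P.complex.linearYonedaObj k Y
  let S := K.sc' 0 1 2
  have e1 := (P.isoExt (R := k) 1 Y)
  have e2 : K.homology 1 ≅ S.homology :=
    ShortComplex.homologyMapIso (K.isoSc' 0 1 2 (by simp) (by simp))
  have e3 := (e1 ≪≫ e2 ≪≫ S.moduleCatHomologyIso).toLinearEquiv
  rw [e3.finrank_eq]
  have hg : ∀ φ : P.complex.X 1 ⟶ Y, S.g.hom φ = P.complex.d 2 1 ≫ φ := fun φ => rfl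
  have hf : ∀ φ : P.complex.X 0 ⟶ Y, S.f.hom φ = P.complex.d 1 0 ≫ φ := fun φ => rfl
  let L' : LinearMap.ker S.g.hom →ₗ[k] T := L.comp (LinearMap.ker S.g.hom).subtype
  have hL' : Function.Surjective L' := by
    intro t
    obtain ⟨φ, h1, h2⟩ := hs t
    exact ⟨⟨φ, h1⟩, h2⟩
  have hker : LinearMap.range S.moduleCatToCycles = LinearMap.ker L' := by
    ext ⟨φ, hφ⟩
    constructor
    · rintro ⟨ψ, hψ⟩
      have : φ = P.complex.d 1 0 ≫ ψ := (congrArg Subtype.val hψ).symm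
      subst this
      exact hk' ψ
    · intro h
      obtain ⟨ψ, hψ⟩ := hk φ hφ h
      exact ⟨ψ, Subtype.ext hψ.symm⟩
  have := LinearEquiv.finrank_eq (Submodule.quotEquivOfEq _ _ hker ≪≫ₗ L'.quotKerEquivOfSurjective hL')
  exact this

/-- `δ` is an `(f, g)`-derivation. -/
def IsFGDer {k A : Type} [Field k] [Ring A] [Algebra k A] (f g : A →ₐ[k] k) (δ : A →ₗ[k] k) :
    Prop := ∀ u v, δ (u * v) = f u * δ v + δ u * g v

/-- The one-dimensional module attached to a character. -/
noncomputable def charMod {k A : Type} [Field k] [Ring A] [Algebra k A] (f : A →ₐ[k] k) :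
    ModuleCat.{0} A := @ModuleCat.of A _ k _ (Module.compHom k f.toRingHom)

theorem core_inner {k A : Type} [Field k] [Ring A] [Algebra k A] (f g : A →ₐ[k] k)
    {M0 M1 : Type} [AddCommGroup M0] [Module A M0] [AddCommGroup M1] [Module A M1]
    (d : M1 →ₗ[A] M0) (ε : M0 →+ k) (hε : ∀ (a : A) p, ε (a • p) = g a * ε p)
    (hεd : ∀ w, ε (d w) = 0) (hex : ∀ p, ε p = 0 → ∃ w, d w = p) (e : M0) (he : ε e = 1)
    (φ : M1 →+ k) (hφ : ∀ (a : A) w, φ (a • w) = f a * φ w) (hφd : ∀ w, d w = 0 → φ w = 0)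
    (z : A) (w : M1) (hgz : g z = 0) (hw : d w = z • e)
    (hin : ∀ δ : A →ₗ[k] k, IsFGDer f g δ → δ z = φ w → ∃ t, ∀ u, δ u = t * (f u - g u)) :
    ∃ ψ : M0 →+ k, (∀ (a : A) p, ψ (a • p) = f a * ψ p) ∧ ∀ w, φ w = ψ (d w) := by
  have hφ2 : ∀ w w', d w = d w' → φ w = φ w' := by
    intro w w' h
    have := hφd (w - w') (by rw [map_sub, h, sub_self])
    rwa [map_sub, sub_eq_zero] at this
  have hW : ∀ p : M0, ∃ w, d w = p - algebraMap k A (ε p) • e := by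
    intro p
    apply hex
    rw [map_sub, hε, he]; simp
  choose W hWd using hW
  let Φ : M0 →+ k := AddMonoidHom.mk' (fun p => φ (W p)) (by
    intro p q
    rw [← map_add]
    apply hφ2
    rw [map_add, hWd, hWd, hWd, map_add, map_add, add_smul]; abel)
  have hΦ : ∀ p, Φ p = φ (W p) := fun _ => rfl
  have key : ∀ (u : A) p, Φ (u • p) = f u * Φ p + Φ (u • e) * ε p := by
    intro u p
    have h1 : Φ (u • e) * ε p = φ (algebraMap k A (ε p) • W (u • e)) := by
      rw [hφ, hΦ]; simp [mul_comm]
    rw [h1, hΦ, hΦ, ← hφ, ← map_add]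
    apply hφ2
    rw [map_add, map_smul, map_smul, hWd, hWd, hWd, hε, hε, he, smul_sub, smul_sub, mul_one,
      smul_smul, smul_smul, smul_smul, ← map_mul, mul_comm (g u), Algebra.commutes (ε p) u]
    abel
  let δ : A →ₗ[k] k :=
    { toFun := fun u => Φ (u • e)
      map_add' := fun u v => by rw [add_smul, map_add]
      map_smul' := fun c u => by
        have : Φ e = 0 := by
          rw [hΦ]; apply hφd; rw [hWd, he]; simp
        rw [Algebra.smul_def, mul_smul, key, hε, he]
        have h2 := key (algebraMap k A c) e
        rw [this] at h2
        have h3 : Φ (algebraMap k A c • e) = 0 := by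
          rw [hΦ]; apply hφd; rw [hWd, hε, he]; simp
        rw [h3]; simp }
  have hδ : ∀ u, δ u = Φ (u • e) := fun _ => rfl
  obtain ⟨t, ht⟩ := hin δ (by
      intro u v
      rw [hδ, hδ, hδ, mul_smul, key, hε, he, mul_one]) (by
      rw [hδ, hΦ]
      apply hφ2
      rw [hWd, hw, hε, hgz]; simp)
  refine ⟨AddMonoidHom.mk' (fun p => Φ p + t * ε p) (by intro p q; simp only [map_add]; ring),
    ?_, ?_⟩
  · intro a p
    simp only [AddMonoidHom.mk'_apply]
    rw [key, ← hδ, ht, hε]; ring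
  · intro w
    simp only [AddMonoidHom.mk'_apply]
    rw [hεd, mul_zero, add_zero, hΦ]
    apply hφ2
    rw [hWd, hεd]; simp

/-- The extension module attached to a derivation. -/
@[reducible] noncomputable def derModule {k A : Type} [Field k] [Ring A] [Algebra k A]
    (f g : A →ₐ[k] k)
    (δ : A →ₗ[k] k) (hδ : IsFGDer f g δ) : Module A (k × k) :=
  letI : SMul A (k × k) := ⟨fun a p => (f a * p.1 + δ a * p.2, g a * p.2)⟩
  have hsm : ∀ (a : A) (p : k × k), a • p = (f a * p.1 + δ a * p.2, g a * p.2) := fun _ _ => rfl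
  have h1 : δ 1 = 0 := by
    have := hδ 1 1
    simpa using this
  Module.ofMinimalAxioms
    (fun r x y => by
      rw [hsm, hsm, hsm]; ext <;> simp only [Prod.fst_add, Prod.snd_add] <;> ring)
    (fun r s x => by
      rw [hsm, hsm, hsm]; ext <;> simp only [Prod.fst_add, Prod.snd_add, map_add] <;> ring)
    (fun r s x => by
      rw [hsm, hsm, hsm]; ext <;> simp only [map_mul, hδ r s] <;> ring)
    (fun x => by rw [hsm]; simp [h1])

theorem finrank_ext_char {k A : Type} [Field k] [Ring A] [Algebra k A] (f g : A →ₐ[k] k)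
    {T : Type} [AddCommGroup T] [Module k T] (τ : k →ₗ[k] T) (z : A) (hfz : f z = 0)
    (hgz : g z = 0)
    (hs : ∀ t, ∃ δ : A →ₗ[k] k, IsFGDer f g δ ∧ τ (δ z) = t)
    (hin : ∀ δ : A →ₗ[k] k, IsFGDer f g δ → τ (δ z) = 0 → ∃ t, ∀ u, δ u = t * (f u - g u)) :
    Module.finrank k (((Ext k (ModuleCat.{0} A) 1).obj (Opposite.op (charMod g))).obj (charMod f)) =
      Module.finrank k T := by
  let P := projectiveResolution (charMod g)
  let π : P.complex.X 0 ⟶ charMod g :=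
    P.π.f 0 ≫ (HomologicalComplex.singleObjXSelf (ComplexShape.down ℕ) 0 (charMod g)).hom
  have hπ0 : P.complex.d 1 0 ≫ π = 0 := by
    simp only [π]
    rw [← Category.assoc, P.complex_d_comp_π_f_zero, Limits.zero_comp]
  have hπe : Epi π := inferInstanceAs (Epi (_ ≫ _))
  have hex : (ShortComplex.mk _ _ hπ0).Exact := by
    have h1 : (ShortComplex.mk _ _ P.complex_d_comp_π_f_zero).Exact :=
      ShortComplex.exact_of_g_is_cokernel _ P.isColimitCokernelCofork
    refine (ShortComplex.exact_iff_of_iso ?_).1 h1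
    exact ShortComplex.isoMk (Iso.refl _) (Iso.refl _)
      (HomologicalComplex.singleObjXSelf (ComplexShape.down ℕ) 0 (charMod g))
      (by simp) (by simp [π])
  rw [ShortComplex.moduleCat_exact_iff] at hex
  have hex1 := P.exact_succ 0
  rw [ShortComplex.moduleCat_exact_iff] at hex1
  have hπs : Function.Surjective π.hom := (ModuleCat.epi_iff_surjective π).1 hπe
  let ε : P.complex.X 0 →+ k := π.hom.toAddMonoidHom
  have hε : ∀ (a : A) p, ε (a • p) = g a * ε p := fun a p => π.hom.map_smul a p
  have hεd : ∀ w, ε ((P.complex.d 1 0).hom w) = 0 := fun w =>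
    congrArg (fun q => q.hom w) hπ0
  have hex' : ∀ p, ε p = 0 → ∃ w, (P.complex.d 1 0).hom w = p := fun p hp => hex p hp
  obtain ⟨e, he⟩ : ∃ e, ε e = 1 := hπs (1 : k)
  obtain ⟨w, hw⟩ := hex' (z • e) (by rw [hε, hgz, zero_mul])
  let L0 : (P.complex.X 1 ⟶ charMod f) →ₗ[k] k :=
    { toFun := fun φ => (φ.hom w : k)
      map_add' := fun φ φ' => rfl
      map_smul' := fun c φ => by
        change @HMul.hMul k k k _ (f (algebraMap k A c)) (φ.hom w) = @HMul.hMul k k k _ c (φ.hom w)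
        simp }
  let L : (P.complex.X 1 ⟶ charMod f) →ₗ[k] T := τ.comp L0
  have hL : ∀ φ, L φ = τ (φ.hom w) := fun _ => rfl
  refine finrank_ext_one P L ?_ ?_ ?_
  · intro t
    obtain ⟨δ, hδ, ht⟩ := hs t
    let _ := derModule f g δ hδ
    have hsm : ∀ (a : A) (p : k × k), a • p = (f a * p.1 + δ a * p.2, g a * p.2) := fun _ _ => rfl
    let E : ModuleCat.{0} A := ModuleCat.of A (k × k)
    let q : E ⟶ charMod g := by
      letI : Module A k := Module.compHom k g.toRingHom
      exact ModuleCat.ofHom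
        { toFun := fun p : k × k => p.2
          map_add' := fun _ _ => rfl
          map_smul' := fun _ _ => rfl }
    have hqe : Epi q := (ModuleCat.epi_iff_surjective q).2 fun s => ⟨((0, s) : k × k), rfl⟩
    let θ : P.complex.X 0 ⟶ E := Projective.factorThru π q
    let Θ : P.complex.X 0 →+ k × k := θ.hom.toAddMonoidHom
    have hΘ : ∀ (a : A) p, Θ (a • p) = (f a * (Θ p).1 + δ a * (Θ p).2, g a * (Θ p).2) :=
      fun a p => θ.hom.map_smul a p
    have hθ : ∀ p, (Θ p).2 = ε p := fun p =>
      congrArg (fun r => r.hom p) (Projective.factorThru_comp π q)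
    let φ : P.complex.X 1 ⟶ charMod f := by
      letI : Module A k := Module.compHom k f.toRingHom
      exact ModuleCat.ofHom
        { toFun := fun w => (Θ ((P.complex.d 1 0).hom w)).1
          map_add' := fun x y => by
            rw [map_add, map_add]; rfl
          map_smul' := fun a x => by
            rw [map_smul, hΘ, hθ, hεd, mul_zero, add_zero]; rfl }
    have hφ : ∀ w, (φ.hom w : k) = (Θ ((P.complex.d 1 0).hom w)).1 := fun _ => rfl
    refine ⟨φ, ?_, ?_⟩
    · ext w
      have h0 : (P.complex.d 1 0).hom ((P.complex.d 2 1).hom w) = 0 :=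
        congrArg (fun r => r.hom w) (P.complex.d_comp_d 2 1 0)
      change (Θ ((P.complex.d 1 0).hom ((P.complex.d 2 1).hom w))).1 = 0
      rw [h0, map_zero]; rfl
    · rw [hL, hφ, hw, hΘ, ← ht]
      rw [hθ, he, hfz, mul_one, zero_mul, zero_add]
  · intro φ hφ0 hLφ
    have := core_inner f g (P.complex.d 1 0).hom ε hε hεd hex' e he
      φ.hom.toAddMonoidHom (fun a p => φ.hom.map_smul a p)
      (fun w hw => by
        obtain ⟨v, rfl⟩ := hex1 w hw
        exact congrArg (fun r => r.hom v) hφ0) z w hgz hw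
      (fun δ hδ h => hin δ hδ (by rw [h]; exact hLφ))
    obtain ⟨ψ, hψ, h⟩ := this
    refine ⟨?_, ?_⟩
    · letI : Module A k := Module.compHom k f.toRingHom
      exact ModuleCat.ofHom { toFun := ψ, map_add' := ψ.map_add, map_smul' := hψ }
    · ext w
      exact h w
  · intro ψ
    rw [hL]
    have : ((P.complex.d 1 0 ≫ ψ).hom w : k) = @HMul.hMul k k k _ (f z) (ψ.hom e) := by
      change (ψ.hom ((P.complex.d 1 0).hom w) : k) = _
      rw [hw]; exact ψ.hom.map_smul z e
    rw [this, hfz]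
    exact (congrArg τ (zero_mul _)).trans (map_zero τ)
end

theorem D_ind (p : DAlg 𝕜 ξ ν → Prop) (h0 : ∀ r : 𝕜, p (algebraMap 𝕜 _ r))
    (hA : p (gA 𝕜 ξ ν)) (hB : p (gB 𝕜 ξ ν)) (hC : p (gC 𝕜 ξ ν)) (hD : p (gD 𝕜 ξ ν))
    (hX : p (gX 𝕜 ξ ν)) (hG : p (gG 𝕜 ξ ν)) (hmul : ∀ u v, p u → p v → p (u * v))
    (hadd : ∀ u v, p u → p v → p (u + v)) (u : DAlg 𝕜 ξ ν) : p u := by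
  obtain ⟨y, rfl⟩ := RingQuot.mkAlgHom_surjective 𝕜 (DRel 𝕜 ξ ν) u
  induction y using FreeAlgebra.induction with
  | grade0 r => rw [AlgHom.commutes]; exact h0 r
  | grade1 x => cases x <;> assumption
  | mul a b ha hb => rw [map_mul]; exact hmul _ _ ha hb
  | add a b ha hb => rw [map_add]; exact hadd _ _ ha hb

/-- Matrices of the generators on a two dimensional extension. -/
def extMat (p p' P q q' Q B C X : 𝕜) : DGen → Matrix (Fin 2) (Fin 2) 𝕜
  | .a => !![p, 0; 0, q]
  | .b => !![0, B; 0, 0]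
  | .c => !![0, C; 0, 0]
  | .d => !![p', 0; 0, q']
  | .x => !![0, X; 0, 0]
  | .g => !![P, 0; 0, Q]

theorem mat2_ext {M N : Matrix (Fin 2) (Fin 2) 𝕜} (h1 : M 0 0 = N 0 0) (h2 : M 0 1 = N 0 1)
    (h3 : M 1 0 = N 1 0) (h4 : M 1 1 = N 1 1) : M = N := by
  ext i j
  fin_cases i <;> fin_cases j <;> assumption

theorem exists_der (f g : DAlg 𝕜 ξ ν →ₐ[𝕜] 𝕜) (p p' q q' B C X : 𝕜)
    (hξ : ξ ^ 2 = -1) (hp : p * p' = 1) (hq : q * q' = 1) (hp4 : p ^ 4 = 1)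
    (hPQ : q ^ 2 = - p ^ 2) (hB : B = p ^ 2 * C) (hC : p * C = ξ * q * C)
    (hX : (p + ξ * q) * X = 2 * ν * ξ * p ^ 2 * C)
    (hf : f (gA 𝕜 ξ ν) = p ∧ f (gB 𝕜 ξ ν) = 0 ∧ f (gC 𝕜 ξ ν) = 0 ∧
      f (gD 𝕜 ξ ν) = p' ∧ f (gX 𝕜 ξ ν) = 0 ∧ f (gG 𝕜 ξ ν) = p ^ 2)
    (hg : g (gA 𝕜 ξ ν) = q ∧ g (gB 𝕜 ξ ν) = 0 ∧ g (gC 𝕜 ξ ν) = 0 ∧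
      g (gD 𝕜 ξ ν) = q' ∧ g (gX 𝕜 ξ ν) = 0 ∧ g (gG 𝕜 ξ ν) = q ^ 2) :
    ∃ δ : DAlg 𝕜 ξ ν →ₗ[𝕜] 𝕜, IsFGDer f g δ ∧ δ (gC 𝕜 ξ ν) = C ∧ δ (gX 𝕜 ξ ν) = X := by
  have hq4 : q ^ 4 = 1 := by linear_combination hp4 + (q^2 - p^2) * hPQ
  have hp' : p' = p ^ 3 := by linear_combination (-p') * hp4 + p ^ 3 * hp
  have hq' : q' = - p ^ 2 * q := by
    linear_combination (-q') * hq4 + q ^ 3 * hq + q * hPQ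
  let F := FreeAlgebra.lift 𝕜 (extMat p p' (p ^ 2) q q' (q ^ 2) B C X)
  have hF : ∀ ⦃u v⦄, DRel 𝕜 ξ ν u v → F u = F v := by
    intro u v h
    cases h <;> simp only [F, map_mul, map_smul, map_zero, map_one, map_sub, map_add, map_neg,
        map_pow, FreeAlgebra.lift_ι_apply, extMat] <;> apply mat2_ext <;>
      simp [Matrix.mul_apply, pow_succ, Fin.sum_univ_two]
    all_goals subst hB hp' hq'
    · linear_combination p ^ 2 * hC
    · linear_combination hC
    · linear_combination (-ξ * p ^ 2) * hC - p ^ 2 * q * C * hξ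
    · linear_combination (-ξ * p ^ 4) * hC - p ^ 4 * q * C * hξ
    · ring
    · ring
    · linear_combination hp
    · linear_combination hq
    · ring
    · linear_combination hp4
    · linear_combination hq4
    · linear_combination (p ^ 4 + 1) * hp4
    · linear_combination (q ^ 4 + 1) * hq4
    · linear_combination - hp4
    · linear_combination - hq4
    · linear_combination X * hPQ
    · ring
    · ring
    · linear_combination p ^ 2 * C * hPQ
    · linear_combination C * hPQ
    · ring
    · ring
    · linear_combination hX
    · right; linear_combination -p * hp
    · right; linear_combination -q * hq
    · right; ring
    · right; linear_combination -q * hPQ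
    · linear_combination p ^ 2 * hX + ν * ξ * C * hp4
  let ρ := RingQuot.liftAlgHom 𝕜 ⟨F, hF⟩
  have hρ : ∀ i, ρ (RingQuot.mkAlgHom 𝕜 (DRel 𝕜 ξ ν) (FreeAlgebra.ι 𝕜 i)) =
      extMat p p' (p ^ 2) q q' (q ^ 2) B C X i := by
    intro i
    simp [ρ, F, RingQuot.liftAlgHom_mkAlgHom_apply]
  obtain ⟨f1, f2, f3, f4, f5, f6⟩ := hf
  obtain ⟨g1, g2, g3, g4, g5, g6⟩ := hg
  have hall : ∀ u, ρ u 1 0 = 0 ∧ ρ u 0 0 = f u ∧ ρ u 1 1 = g u := by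
    intro u
    induction u using D_ind with
    | h0 r => simp [Matrix.algebraMap_matrix_apply]
    | hA => rw [f1, g1]; simp [gA, hρ, extMat]
    | hB => rw [f2, g2]; simp [gB, hρ, extMat]
    | hC => rw [f3, g3]; simp [gC, hρ, extMat]
    | hD => rw [f4, g4]; simp [gD, hρ, extMat]
    | hX => rw [f5, g5]; simp [gX, hρ, extMat]
    | hG => rw [f6, g6]; simp [gG, hρ, extMat]
    | hmul u v hu hv =>
      simp [Matrix.mul_apply, Fin.sum_univ_two, hu.1, hv.1, hu.2.1, hv.2.1, hu.2.2, hv.2.2]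
    | hadd u v hu hv => simp [hu.1, hv.1, hu.2.1, hv.2.1, hu.2.2, hv.2.2]
  refine ⟨{ toFun := fun u => ρ u 0 1, map_add' := by simp, map_smul' := by simp }, ?_, ?_, ?_⟩
  · intro u v
    simp [Matrix.mul_apply, Fin.sum_univ_two, (hall u).2.1, (hall v).2.2]
  · simp [gC, hρ, extMat]
  · simp [gX, hρ, extMat]

theorem der_relations (f g : DAlg 𝕜 ξ ν →ₐ[𝕜] 𝕜) (p p' q q' : 𝕜)
    (hp : p ≠ 0) (hq' : q' ≠ 0) (hν : ν ≠ 0) (hξ : ξ ≠ 0)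
    (hf : f (gA 𝕜 ξ ν) = p ∧ f (gB 𝕜 ξ ν) = 0 ∧ f (gC 𝕜 ξ ν) = 0 ∧
      f (gD 𝕜 ξ ν) = p' ∧ f (gX 𝕜 ξ ν) = 0 ∧ f (gG 𝕜 ξ ν) = p ^ 2)
    (hg : g (gA 𝕜 ξ ν) = q ∧ g (gB 𝕜 ξ ν) = 0 ∧ g (gC 𝕜 ξ ν) = 0 ∧
      g (gD 𝕜 ξ ν) = q' ∧ g (gX 𝕜 ξ ν) = 0 ∧ g (gG 𝕜 ξ ν) = q ^ 2)
    (δ : DAlg 𝕜 ξ ν →ₗ[𝕜] 𝕜) (hδ : IsFGDer f g δ) :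
    δ (gB 𝕜 ξ ν) = p ^ 2 * δ (gC 𝕜 ξ ν) ∧
    (p - ξ * q) * δ (gC 𝕜 ξ ν) = 0 ∧
    (p + ξ * q) * δ (gX 𝕜 ξ ν) = 2 * ν * ξ * p ^ 2 * δ (gC 𝕜 ξ ν) ∧
    (p ^ 3 + p ^ 2 * q + p * q ^ 2 + q ^ 3) * δ (gA 𝕜 ξ ν) = 0 ∧
    (δ (gA 𝕜 ξ ν) = 0 → δ (gD 𝕜 ξ ν) = 0 ∧ δ (gG 𝕜 ξ ν) = 0) := by
  obtain ⟨f1, f2, f3, f4, f5, f6⟩ := hf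
  obtain ⟨g1, g2, g3, g4, g5, g6⟩ := hg
  have h1 : δ 1 = 0 := by
    have := hδ 1 1
    simpa using this
  have e1 : gA 𝕜 ξ ν * gA 𝕜 ξ ν * gC 𝕜 ξ ν = gB 𝕜 ξ ν := by
    simpa [gA, gB, gC] using RingQuot.mkAlgHom_rel 𝕜 (DRel.aac (𝕜 := 𝕜) (ξ := ξ) (ν := ν))
  have e2 : gA 𝕜 ξ ν * gC 𝕜 ξ ν = ξ • (gC 𝕜 ξ ν * gA 𝕜 ξ ν) := by
    simpa [gA, gC] using RingQuot.mkAlgHom_rel 𝕜 (DRel.ac (𝕜 := 𝕜) (ξ := ξ) (ν := ν))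
  have e3 : gA 𝕜 ξ ν * gX 𝕜 ξ ν = (ν * ξ) • (gB 𝕜 ξ ν + gG 𝕜 ξ ν * gC 𝕜 ξ ν)
      - ξ • (gX 𝕜 ξ ν * gA 𝕜 ξ ν) := by
    simpa only [gA, gX, gB, gG, gC, map_mul, map_add, map_sub, map_smul] using
      RingQuot.mkAlgHom_rel 𝕜 (DRel.axr (𝕜 := 𝕜) (ξ := ξ) (ν := ν))
  have e4 : gA 𝕜 ξ ν * (gA 𝕜 ξ ν * (gA 𝕜 ξ ν * gA 𝕜 ξ ν)) = 1 := by
    simpa [gA, pow_succ, mul_assoc] using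
      RingQuot.mkAlgHom_rel 𝕜 (DRel.afour (𝕜 := 𝕜) (ξ := ξ) (ν := ν))
  have e5 : gA 𝕜 ξ ν * gD 𝕜 ξ ν = 1 := by
    simpa [gA, gD] using RingQuot.mkAlgHom_rel 𝕜 (DRel.adone (𝕜 := 𝕜) (ξ := ξ) (ν := ν))
  have e6 : gB 𝕜 ξ ν * gX 𝕜 ξ ν = (ν * ξ) • (gA 𝕜 ξ ν - gG 𝕜 ξ ν * gD 𝕜 ξ ν)
      + ξ • (gX 𝕜 ξ ν * gB 𝕜 ξ ν) := by
    simpa only [gA, gX, gB, gG, gD, map_mul, map_add, map_sub, map_smul] using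
      RingQuot.mkAlgHom_rel 𝕜 (DRel.bxr (𝕜 := 𝕜) (ξ := ξ) (ν := ν))
  have d1 := congrArg δ e1
  have d2 := congrArg δ e2
  have d3 := congrArg δ e3
  have d4 := congrArg δ e4
  have d5 := congrArg δ e5
  have d6 := congrArg δ e6
  simp only [hδ _ _, map_add, map_sub, map_smul, map_mul, f1, f2, f3, f4, f5, f6, g1, g2, g3, g4,
    g5, g6, h1, smul_eq_mul] at d1 d2 d3 d4 d5 d6
  have hB : δ (gB 𝕜 ξ ν) = p ^ 2 * δ (gC 𝕜 ξ ν) := by linear_combination - d1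
  refine ⟨hB, by linear_combination d2, ?_, by linear_combination d4, ?_⟩
  · rw [hB] at d3
    linear_combination d3
  · intro hA
    rw [hA] at d5 d6
    have hD : δ (gD 𝕜 ξ ν) = 0 := by
      have : p * δ (gD 𝕜 ξ ν) = 0 := by linear_combination d5
      exact (mul_eq_zero.1 this).resolve_left hp
    refine ⟨hD, ?_⟩
    rw [hD] at d6
    have : (ν * ξ * q') * δ (gG 𝕜 ξ ν) = 0 := by linear_combination d6
    exact (mul_eq_zero.1 this).resolve_left (mul_ne_zero (mul_ne_zero hν hξ) hq')

theorem der_inner (f g : DAlg 𝕜 ξ ν →ₐ[𝕜] 𝕜) (p p' q q' : 𝕜)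
    (hp : p ≠ 0) (hq' : q' ≠ 0) (hν : ν ≠ 0) (hξ : ξ ≠ 0)
    (hf : f (gA 𝕜 ξ ν) = p ∧ f (gB 𝕜 ξ ν) = 0 ∧ f (gC 𝕜 ξ ν) = 0 ∧
      f (gD 𝕜 ξ ν) = p' ∧ f (gX 𝕜 ξ ν) = 0 ∧ f (gG 𝕜 ξ ν) = p ^ 2)
    (hg : g (gA 𝕜 ξ ν) = q ∧ g (gB 𝕜 ξ ν) = 0 ∧ g (gC 𝕜 ξ ν) = 0 ∧
      g (gD 𝕜 ξ ν) = q' ∧ g (gX 𝕜 ξ ν) = 0 ∧ g (gG 𝕜 ξ ν) = q ^ 2)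
    (δ : DAlg 𝕜 ξ ν →ₗ[𝕜] 𝕜) (hδ : IsFGDer f g δ) (hC : δ (gC 𝕜 ξ ν) = 0)
    (hX : δ (gX 𝕜 ξ ν) = 0) (hA : p ≠ q ∨ δ (gA 𝕜 ξ ν) = 0) :
    ∃ t, ∀ u, δ u = t * (f u - g u) := by
  obtain ⟨t, ht⟩ : ∃ t, δ (gA 𝕜 ξ ν) = t * (p - q) := by
    rcases hA with h | h
    · exact ⟨δ (gA 𝕜 ξ ν) / (p - q), by rw [div_mul_cancel₀ _ (sub_ne_zero.2 h)]⟩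
    · exact ⟨0, by rw [h, zero_mul]⟩
  refine ⟨t, ?_⟩
  let δ' : DAlg 𝕜 ξ ν →ₗ[𝕜] 𝕜 := δ - t • (f.toLinearMap - g.toLinearMap)
  have hδ'a : ∀ u, δ' u = δ u - t * (f u - g u) := fun _ => rfl
  have hδ' : IsFGDer f g δ' := by
    intro u v
    rw [hδ'a, hδ'a, hδ'a, hδ u v, map_mul, map_mul]
    ring
  obtain ⟨rB, -, -, -, r⟩ := der_relations f g p p' q q' hp hq' hν hξ hf hg δ' hδ'
  have hA' : δ' (gA 𝕜 ξ ν) = 0 := by rw [hδ'a, ht, hf.1, hg.1, sub_self]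
  have hC' : δ' (gC 𝕜 ξ ν) = 0 := by rw [hδ'a, hC, hf.2.2.1, hg.2.2.1]; simp
  have hX' : δ' (gX 𝕜 ξ ν) = 0 := by rw [hδ'a, hX, hf.2.2.2.2.1, hg.2.2.2.2.1]; simp
  have hB' : δ' (gB 𝕜 ξ ν) = 0 := by rw [rB, hC', mul_zero]
  have hall : ∀ u, δ' u = 0 := by
    intro u
    induction u using D_ind with
    | h0 s =>
      have h1 : δ' 1 = 0 := by
        have := hδ' 1 1
        simpa using this
      rw [Algebra.algebraMap_eq_smul_one, map_smul, h1, smul_zero]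
    | hA => exact hA'
    | hB => exact hB'
    | hC => exact hC'
    | hD => exact (r hA').1
    | hX => exact hX'
    | hG => exact (r hA').2
    | hmul u v hu hv => rw [hδ' u v, hu, hv, mul_zero, zero_mul, add_zero]
    | hadd u v hu hv => rw [map_add, hu, hv, add_zero]
  intro u
  exact sub_eq_zero.1 (hall u)

theorem zmod_cases (hξ : ξ ^ 2 = -1) (ℓ m : ZMod 4) :
    (m = ℓ + 1 ∧ ξ ^ m.val = ξ * ξ ^ ℓ.val) ∨ (m = ℓ - 1 ∧ ξ ^ ℓ.val = ξ * ξ ^ m.val) ∨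
    (¬ (m = ℓ + 1 ∨ m = ℓ - 1) ∧ ξ ^ m.val = ξ ^ ℓ.val) ∨
    (¬ (m = ℓ + 1 ∨ m = ℓ - 1) ∧ ξ ^ m.val = - ξ ^ ℓ.val) := by
  have h3 : ξ ^ 3 = -ξ := by linear_combination ξ * hξ
  have h4 : ξ * ξ = -1 := by linear_combination hξ
  obtain ⟨j, rfl⟩ : ∃ j, m = ℓ + j := ⟨m - ℓ, by ring⟩
  have hval : ∀ i j : ZMod 4, ξ ^ (i + j).val = ξ ^ i.val * ξ ^ j.val := by
    intro i j
    have h44 : ξ ^ 4 = 1 := by linear_combination (ξ ^ 2 - 1) * hξ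
    rw [ZMod.val_add, ← pow_add, ← pow_mod_orderOf ξ (i.val + j.val),
      ← pow_mod_orderOf ξ ((i.val + j.val) % 4), Nat.mod_mod_of_dvd _ (orderOf_dvd_of_pow_eq_one h44)]
  have hj : j = 0 ∨ j = 1 ∨ j = 2 ∨ j = 3 := by revert j; decide
  rcases hj with rfl | rfl | rfl | rfl
  · right; right; left
    refine ⟨?_, by simp⟩
    revert ℓ; decide
  · left
    refine ⟨rfl, ?_⟩
    rw [hval, show (1 : ZMod 4).val = 1 from rfl]; ring
  · right; right; right
    refine ⟨?_, ?_⟩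
    · revert ℓ; decide
    · rw [hval, show (2 : ZMod 4).val = 2 from rfl, hξ]; ring
  · right; left
    refine ⟨?_, ?_⟩
    · revert ℓ; decide
    · rw [hval, show (3 : ZMod 4).val = 3 from rfl, h3]; linear_combination ξ ^ ℓ.val * hξ

open CategoryTheory in
/-- For all `ℓ, m ∈ ℤ/4`, the `𝕜`-dimension of
`Ext¹_D(𝕜_{χ^m}, 𝕜_{χ^ℓ})` equals `1` if `m ≡ ℓ ± 1 (mod 4)` and `0` otherwise. -/
theorem stmt_15 (𝕜 : Type) [Field 𝕜] [IsAlgClosed 𝕜] [CharZero 𝕜]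
    (ξ ν : 𝕜) (hξ : IsPrimitiveRoot ξ 4) (hν : ν ^ 2 = 2)
    (ℓ m : ZMod 4) (f g : DAlg 𝕜 ξ ν →ₐ[𝕜] 𝕜)
    (hf : IsChi 𝕜 ξ ν f ℓ) (hg : IsChi 𝕜 ξ ν g m) :
    Module.finrank 𝕜
      (((Ext 𝕜 (ModuleCat (DAlg 𝕜 ξ ν)) 1).obj
          (Opposite.op (chiModuleCat 𝕜 ξ ν g))).obj (chiModuleCat 𝕜 ξ ν f)) =
      if m = ℓ + 1 ∨ m = ℓ - 1 then 1 else 0 := by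
  have hξ2 : ξ ^ 2 = -1 := by
    have h4 := hξ.pow_eq_one
    have h2 : ξ ^ 2 ≠ 1 := hξ.pow_ne_one_of_pos_of_lt (by norm_num) (by norm_num)
    have : (ξ ^ 2 - 1) * (ξ ^ 2 + 1) = 0 := by linear_combination h4
    rcases mul_eq_zero.1 this with h | h
    · exact absurd (sub_eq_zero.1 h) h2
    · exact eq_neg_of_add_eq_zero_left h
  have hξ0 : ξ ≠ 0 := hξ.ne_zero (by norm_num)
  have hν0 : ν ≠ 0 := by
    rintro rfl
    norm_num at hν
  have hsq : ∀ n : ℕ, (-1 : 𝕜) ^ n = (ξ ^ n) ^ 2 := by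
    intro n
    rw [← pow_mul, mul_comm, pow_mul, hξ2]
  have hp4 : ∀ n : ℕ, (ξ ^ n) ^ 4 = 1 := by
    intro n
    rw [← pow_mul, mul_comm, pow_mul, hξ.pow_eq_one, one_pow]
  unfold IsChi at hf hg
  rw [hsq] at hf hg
  have hcase := zmod_cases hξ2 ℓ m
  have hp4' := hp4 ℓ.val
  have hp0 : ξ ^ ℓ.val ≠ 0 := pow_ne_zero _ hξ0
  have hq0 : ξ ^ m.val ≠ 0 := pow_ne_zero _ hξ0
  generalize ξ ^ ℓ.val = p at *
  generalize ξ ^ m.val = q at *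
  have hq0' : q⁻¹ ≠ 0 := inv_ne_zero hq0
  have h2 : (2 : 𝕜) ≠ 0 := two_ne_zero
  have rel := der_relations f g p p⁻¹ q q⁻¹ hp0 hq0' hν0 hξ0 hf hg
  have inn := der_inner f g p p⁻¹ q q⁻¹ hp0 hq0' hν0 hξ0 hf hg
  have ex := fun B C X => exists_der f g p p⁻¹ q q⁻¹ B C X hξ2 (mul_inv_cancel₀ hp0)
    (mul_inv_cancel₀ hq0) hp4'
  have h1p : (1 : 𝕜) + ξ ≠ 0 := by
    intro h
    apply h2
    linear_combination (1 - ξ) * h + hξ2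
  have h1m : (1 : 𝕜) - ξ ≠ 0 := by
    intro h
    apply h2
    linear_combination (1 + ξ) * h + hξ2
  change Module.finrank 𝕜 (((Ext 𝕜 (ModuleCat (DAlg 𝕜 ξ ν)) 1).obj
          (Opposite.op (charMod g))).obj (charMod f)) = _
  rcases hcase with ⟨hm, hq⟩ | ⟨hm, hq⟩ | ⟨hm, hq⟩ | ⟨hm, hq⟩
  · -- `q = ξ p`: detected by `x`
    rw [if_pos (Or.inl hm), finrank_ext_char f g (LinearMap.id : 𝕜 →ₗ[𝕜] 𝕜) (gX 𝕜 ξ ν)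
      hf.2.2.2.2.1 hg.2.2.2.2.1 ?_ ?_, Module.finrank_self]
    · intro t
      obtain ⟨δ, h1, -, h3⟩ := ex 0 0 t (by rw [hq]; linear_combination p ^ 2 * hξ2) (by ring)
        (by ring) (by rw [hq]; linear_combination p * t * hξ2) hf hg
      exact ⟨δ, h1, h3⟩
    · intro δ hδ hx
      obtain ⟨-, r2, -⟩ := rel δ hδ
      refine inn δ hδ ?_ hx (Or.inl ?_)
      · have : (2 * p) * δ (gC 𝕜 ξ ν) = 0 := by
          rw [hq] at r2
          linear_combination r2 + p * δ (gC 𝕜 ξ ν) * hξ2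
        exact (mul_eq_zero.1 this).resolve_left (mul_ne_zero h2 hp0)
      · intro h
        exact (mul_ne_zero h1m hp0) (by linear_combination h + hq)
  · -- `p = ξ q`: detected by `c`
    rw [if_pos (Or.inr hm), finrank_ext_char f g (LinearMap.id : 𝕜 →ₗ[𝕜] 𝕜) (gC 𝕜 ξ ν)
      hf.2.2.1 hg.2.2.1 ?_ ?_, Module.finrank_self]
    · intro t
      obtain ⟨δ, h1, h3, -⟩ := ex (p ^ 2 * t) t (ν * ξ * p * t)
        (by rw [hq]; linear_combination q ^ 2 * hξ2) rfl
        (by rw [hq]) (by rw [← hq]; ring) hf hg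
      exact ⟨δ, h1, h3⟩
    · intro δ hδ hc
      obtain ⟨-, -, r3, -⟩ := rel δ hδ
      have hc' : δ (gC 𝕜 ξ ν) = 0 := hc
      refine inn δ hδ hc ?_ (Or.inl ?_)
      · have : (2 * p) * δ (gX 𝕜 ξ ν) = 0 := by
          rw [hc', ← hq] at r3
          linear_combination r3
        exact (mul_eq_zero.1 this).resolve_left (mul_ne_zero h2 hp0)
      · intro h
        exact (mul_ne_zero h1m hq0) (by linear_combination hq - h)
  · -- `q = p`
    subst hq
    rw [if_neg hm, finrank_ext_char f g (0 : 𝕜 →ₗ[𝕜] PUnit) 0 (map_zero f) (map_zero g) ?_ ?_]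
    · exact Module.finrank_zero_of_subsingleton
    · intro t
      exact ⟨0, fun u v => by simp, rfl⟩
    · intro δ hδ _
      obtain ⟨-, r2, r3, r4, -⟩ := rel δ hδ
      have hc : δ (gC 𝕜 ξ ν) = 0 := by
        have : (q * (1 - ξ)) * δ (gC 𝕜 ξ ν) = 0 := by linear_combination r2
        exact (mul_eq_zero.1 this).resolve_left (mul_ne_zero hp0 h1m)
      refine inn δ hδ hc ?_ (Or.inr ?_)
      · rw [hc] at r3
        have : (q * (1 + ξ)) * δ (gX 𝕜 ξ ν) = 0 := by linear_combination r3
        exact (mul_eq_zero.1 this).resolve_left (mul_ne_zero hp0 h1p)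
      · have : (2 * 2 * q ^ 3) * δ (gA 𝕜 ξ ν) = 0 := by linear_combination r4
        exact (mul_eq_zero.1 this).resolve_left
          (mul_ne_zero (mul_ne_zero h2 h2) (pow_ne_zero _ hp0))
  · -- `q = -p`
    subst hq
    rw [if_neg hm, finrank_ext_char f g (0 : 𝕜 →ₗ[𝕜] PUnit) 0 (map_zero f) (map_zero g) ?_ ?_]
    · exact Module.finrank_zero_of_subsingleton
    · intro t
      exact ⟨0, fun u v => by simp, rfl⟩
    · intro δ hδ _
      obtain ⟨-, r2, r3, r4, -⟩ := rel δ hδ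
      have hc : δ (gC 𝕜 ξ ν) = 0 := by
        have : (p * (1 + ξ)) * δ (gC 𝕜 ξ ν) = 0 := by linear_combination r2
        exact (mul_eq_zero.1 this).resolve_left (mul_ne_zero hp0 h1p)
      refine inn δ hδ hc ?_ (Or.inl ?_)
      · rw [hc] at r3
        have : (p * (1 - ξ)) * δ (gX 𝕜 ξ ν) = 0 := by linear_combination r3
        exact (mul_eq_zero.1 this).resolve_left (mul_ne_zero hp0 h1m)
      · intro h
        exact (mul_ne_zero h2 hp0) (by linear_combination h)
end

section
/- For all (i,j), (k,ℓ) ∈ Λ and all m ∈ Z/4, the Ext groups Ext¹_D(V_{i,j}, V_{k,ℓ}), Ext¹_D(V_{i,j}, k_{χ^m}) and Ext¹_D(k_{χ^m}, V_{i,j}) all vanish. -/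
open scoped TensorProduct

variable (𝕜 : Type) [Field 𝕜] (ξ ν : 𝕜)

variable {𝕜 ξ ν}
variable {V W : Type} [AddCommGroup V] [Module 𝕜 V] [AddCommGroup W] [Module 𝕜 W]

/-- The left `D`-module determined by a representation `ρ : D →ₐ[𝕜] End 𝕜 V`, as an
object of `ModuleCat D`. -/
noncomputable def repModuleCat {𝕜 : Type} [Field 𝕜] {ξ ν : 𝕜} {V : Type} [AddCommGroup V]
    [Module 𝕜 V] (ρ : DAlg 𝕜 ξ ν →ₐ[𝕜] Module.End 𝕜 V) : ModuleCat (DAlg 𝕜 ξ ν) :=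
  @ModuleCat.of (DAlg 𝕜 ξ ν) _ V _ (Module.compHom V ρ.toRingHom)

section ExtVanishing

/-- `Ext^(n+1)` into an injective object vanishes. -/
theorem isZero_Ext_succ_of_injective_aux {R : Type*} [Ring R] {C : Type*}
    [CategoryTheory.Category C] [CategoryTheory.Abelian C] [CategoryTheory.Linear R C]
    [CategoryTheory.EnoughProjectives C] (X Y : C) [CategoryTheory.Injective Y] (n : ℕ) :
    CategoryTheory.Limits.IsZero (((Ext R C (n + 1)).obj (Opposite.op X)).obj Y) := by
  let P := CategoryTheory.projectiveResolution X
  refine CategoryTheory.Limits.IsZero.of_iso ?_ (P.isoExt (n + 1) Y)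
  rw [← HomologicalComplex.exactAt_iff_isZero_homology,
    HomologicalComplex.exactAt_iff' _ n (n + 1) (n + 2) (by simp) (by simp),
    CategoryTheory.ShortComplex.moduleCat_exact_iff]
  intro (x : P.complex.X (n + 1) ⟶ Y) hx
  have hx' : CategoryTheory.CategoryStruct.comp (P.complex.d (n + 2) (n + 1)) x = 0 := hx
  exact ⟨(P.exact_succ n).descToInjective x hx', (P.exact_succ n).comp_descToInjective x hx'⟩

theorem rel_ac : gA 𝕜 ξ ν * gC 𝕜 ξ ν = ξ • (gC 𝕜 ξ ν * gA 𝕜 ξ ν) := by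
  simpa [gA, gC] using RingQuot.mkAlgHom_rel 𝕜 (DRel.ac (𝕜 := 𝕜) (ξ := ξ) (ν := ν))

theorem rel_cc : gC 𝕜 ξ ν * gC 𝕜 ξ ν = 0 := by
  simpa [gA, gC] using RingQuot.mkAlgHom_rel 𝕜 (DRel.csq (𝕜 := 𝕜) (ξ := ξ) (ν := ν))

theorem rel_ad : gA 𝕜 ξ ν * gD 𝕜 ξ ν = 1 := by
  simpa [gA, gD] using RingQuot.mkAlgHom_rel 𝕜 (DRel.adone (𝕜 := 𝕜) (ξ := ξ) (ν := ν))

theorem rel_aac : gA 𝕜 ξ ν * gA 𝕜 ξ ν * gC 𝕜 ξ ν = gB 𝕜 ξ ν := by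
  simpa [gA, gB, gC] using RingQuot.mkAlgHom_rel 𝕜 (DRel.aac (𝕜 := 𝕜) (ξ := ξ) (ν := ν))

theorem rel_a4 : gA 𝕜 ξ ν ^ 4 = 1 := by
  simpa [gA] using RingQuot.mkAlgHom_rel 𝕜 (DRel.afour (𝕜 := 𝕜) (ξ := ξ) (ν := ν))

theorem rel_g4 : gG 𝕜 ξ ν ^ 4 = 1 := by
  simpa [gG] using RingQuot.mkAlgHom_rel 𝕜 (DRel.gfour (𝕜 := 𝕜) (ξ := ξ) (ν := ν))

theorem rel_xx : gX 𝕜 ξ ν * gX 𝕜 ξ ν = gG 𝕜 ξ ν * gG 𝕜 ξ ν + (-1 : 𝕜) • 1 := by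
  have h := RingQuot.mkAlgHom_rel 𝕜 (DRel.xsq (𝕜 := 𝕜) (ξ := ξ) (ν := ν))
  rw [sub_eq_add_neg, ← neg_one_smul 𝕜] at h
  simp only [map_mul, map_add, map_smul, map_one] at h
  exact h

theorem rel_gx : gG 𝕜 ξ ν * gX 𝕜 ξ ν = (-1 : 𝕜) • (gX 𝕜 ξ ν * gG 𝕜 ξ ν) := by
  have h := RingQuot.mkAlgHom_rel 𝕜 (DRel.gx (𝕜 := 𝕜) (ξ := ξ) (ν := ν))
  rw [← neg_one_smul 𝕜] at h
  simp only [map_mul, map_smul] at h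
  exact h

theorem rel_ag : gA 𝕜 ξ ν * gG 𝕜 ξ ν = gG 𝕜 ξ ν * gA 𝕜 ξ ν := by
  simpa [gG, gA] using RingQuot.mkAlgHom_rel 𝕜 (DRel.ag (𝕜 := 𝕜) (ξ := ξ) (ν := ν))

theorem rel_cg : gC 𝕜 ξ ν * gG 𝕜 ξ ν = (-1 : 𝕜) • (gG 𝕜 ξ ν * gC 𝕜 ξ ν) := by
  have h := RingQuot.mkAlgHom_rel 𝕜 (DRel.cg (𝕜 := 𝕜) (ξ := ξ) (ν := ν))
  rw [← neg_one_smul 𝕜] at h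
  simp only [map_mul, map_smul] at h
  exact h

theorem rel_d : gD 𝕜 ξ ν = gA 𝕜 ξ ν ^ 3 := by
  calc gD 𝕜 ξ ν = gA 𝕜 ξ ν ^ 4 * gD 𝕜 ξ ν := by rw [rel_a4, one_mul]
    _ = gA 𝕜 ξ ν ^ 3 * (gA 𝕜 ξ ν * gD 𝕜 ξ ν) := by rw [← mul_assoc, ← pow_succ]
    _ = _ := by rw [rel_ad, mul_one]

theorem rel_ax : gA 𝕜 ξ ν * gX 𝕜 ξ ν =
    (ν * ξ) • (gA 𝕜 ξ ν * gA 𝕜 ξ ν * gC 𝕜 ξ ν + gG 𝕜 ξ ν * gC 𝕜 ξ ν)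
      - ξ • (gX 𝕜 ξ ν * gA 𝕜 ξ ν) := by
  rw [rel_aac]
  have h := RingQuot.mkAlgHom_rel 𝕜 (DRel.axr (𝕜 := 𝕜) (ξ := ξ) (ν := ν))
  simp only [map_mul, map_sub, map_smul, map_add] at h
  exact h

theorem rel_cx : gC 𝕜 ξ ν * gX 𝕜 ξ ν =
    (ν * ξ) • (gA 𝕜 ξ ν ^ 3 - gG 𝕜 ξ ν * gA 𝕜 ξ ν)
      - ξ • (gX 𝕜 ξ ν * gC 𝕜 ξ ν) := by
  rw [← rel_d]
  have h := RingQuot.mkAlgHom_rel 𝕜 (DRel.cxr (𝕜 := 𝕜) (ξ := ξ) (ν := ν))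
  simp only [map_mul, map_sub, map_smul, map_add] at h
  exact h

theorem D_induction (P : DAlg 𝕜 ξ ν → Prop)
    (hr : ∀ r : 𝕜, P (algebraMap 𝕜 _ r))
    (ha : P (gA 𝕜 ξ ν)) (hc : P (gC 𝕜 ξ ν)) (hx : P (gX 𝕜 ξ ν)) (hg : P (gG 𝕜 ξ ν))
    (hadd : ∀ y z, P y → P z → P (y + z)) (hmul : ∀ y z, P y → P z → P (y * z))
    (z : DAlg 𝕜 ξ ν) : P z := by
  obtain ⟨z, rfl⟩ := RingQuot.mkAlgHom_surjective 𝕜 (DRel 𝕜 ξ ν) z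
  induction z using FreeAlgebra.induction with
  | grade0 r => simpa using hr r
  | grade1 y =>
    cases y with
    | a => exact ha
    | b => 
      have h := hmul _ _ (hmul _ _ ha ha) hc
      rw [rel_aac] at h
      exact h
    | c => exact hc
    | d =>
      have h := hmul _ _ (hmul _ _ ha ha) ha
      rw [← pow_two, ← pow_succ, ← rel_d] at h
      exact h
    | x => exact hx
    | g => exact hg
  | mul y z hy hz => rw [map_mul]; exact hmul _ _ hy hz
  | add y z hy hz => rw [map_add]; exact hadd _ _ hy hz

/-- (16 times) the idempotent of the `(l, u)`-eigenspace of `(a, g)`. -/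
noncomputable def eIdem (ξ ν l u : 𝕜) : DAlg 𝕜 ξ ν :=
  (l ^ 3 • 1 + l ^ 2 • gA 𝕜 ξ ν + l • gA 𝕜 ξ ν ^ 2 + gA 𝕜 ξ ν ^ 3) *
  (u ^ 3 • 1 + u ^ 2 • gG 𝕜 ξ ν + u • gG 𝕜 ξ ν ^ 2 + gG 𝕜 ξ ν ^ 3)

theorem geom_aux {A : Type} [Ring A] [Algebra 𝕜 A] (y : A) (l : 𝕜) (hy : y ^ 4 = 1)
    (hl : l ^ 4 = 1) :
    y * (l ^ 3 • 1 + l ^ 2 • y + l • y ^ 2 + y ^ 3) =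
      l • (l ^ 3 • 1 + l ^ 2 • y + l • y ^ 2 + y ^ 3) := by
  have h1 : y * (l ^ 3 • 1 + l ^ 2 • y + l • y ^ 2 + y ^ 3) =
      l ^ 3 • y + l ^ 2 • y ^ 2 + l • y ^ 3 + y ^ 4 := by
    simp only [mul_add, mul_smul_comm, mul_one, ← pow_succ', ← pow_two]
  have h2 : l • (l ^ 3 • 1 + l ^ 2 • y + l • y ^ 2 + y ^ 3) =
      l ^ 4 • (1 : A) + l ^ 3 • y + l ^ 2 • y ^ 2 + l • y ^ 3 := by
    module
  rw [h1, h2, hy, hl]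
  module

theorem comm_aux {A : Type} [Ring A] [Algebra 𝕜 A] (y z : A) (l : 𝕜) (h : Commute y z) :
    Commute y (l ^ 3 • 1 + l ^ 2 • z + l • z ^ 2 + z ^ 3) :=
  (((((Commute.one_right y).smul_right _).add_right (h.smul_right _)).add_right
    ((h.pow_right 2).smul_right _)).add_right (h.pow_right 3))

theorem comm_eIdem (y : DAlg 𝕜 ξ ν) (l u : 𝕜) (ha : Commute y (gA 𝕜 ξ ν))
    (hg : Commute y (gG 𝕜 ξ ν)) : Commute y (eIdem ξ ν l u) :=
  (comm_aux _ _ _ ha).mul_right (comm_aux _ _ _ hg)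

theorem a_eIdem (l u : 𝕜) (hl : l ^ 4 = 1) :
    gA 𝕜 ξ ν * eIdem ξ ν l u = l • eIdem ξ ν l u := by
  rw [eIdem, ← mul_assoc, geom_aux _ _ rel_a4 hl, smul_mul_assoc]

theorem g_eIdem (l u : 𝕜) (hu : u ^ 4 = 1) :
    gG 𝕜 ξ ν * eIdem ξ ν l u = u • eIdem ξ ν l u := by
  rw [eIdem, ← mul_assoc, (comm_aux _ _ _ (rel_ag (𝕜 := 𝕜) (ξ := ξ) (ν := ν)).symm).eq,
    mul_assoc, geom_aux _ _ rel_g4 hu, mul_smul_comm]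

theorem eIdem_a (l u : 𝕜) (hl : l ^ 4 = 1) :
    eIdem ξ ν l u * gA 𝕜 ξ ν = l • eIdem ξ ν l u := by
  rw [← a_eIdem l u hl]
  exact (comm_eIdem _ _ _ (Commute.refl _) rel_ag).eq.symm

theorem eIdem_g (l u : 𝕜) (hu : u ^ 4 = 1) :
    eIdem ξ ν l u * gG 𝕜 ξ ν = u • eIdem ξ ν l u := by
  rw [← g_eIdem l u hu]
  exact (comm_eIdem _ _ _ (rel_ag).symm (Commute.refl _)).eq.symm

theorem comm_cx_g : Commute (gC 𝕜 ξ ν * gX 𝕜 ξ ν) (gG 𝕜 ξ ν) := by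
  have h1 : gX 𝕜 ξ ν * gG 𝕜 ξ ν = (-1 : 𝕜) • (gG 𝕜 ξ ν * gX 𝕜 ξ ν) := by
    rw [rel_gx, smul_smul, neg_one_mul, neg_neg, one_smul]
  change _ * _ = _ * _
  rw [mul_assoc, h1, mul_smul_comm, ← mul_assoc, rel_cg, smul_mul_assoc, smul_smul, neg_one_mul, neg_neg,
    one_smul, mul_assoc]

theorem comm_xc_g : Commute (gX 𝕜 ξ ν * gC 𝕜 ξ ν) (gG 𝕜 ξ ν) := by
  have h1 : gX 𝕜 ξ ν * gG 𝕜 ξ ν = (-1 : 𝕜) • (gG 𝕜 ξ ν * gX 𝕜 ξ ν) := by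
    rw [rel_gx, smul_smul, neg_one_mul, neg_neg, one_smul]
  change _ * _ = _ * _
  rw [mul_assoc, rel_cg, mul_smul_comm, ← mul_assoc, h1, smul_mul_assoc, smul_smul, neg_one_mul, neg_neg,
    one_smul, mul_assoc]

theorem cgc : gC 𝕜 ξ ν * (gG 𝕜 ξ ν * gC 𝕜 ξ ν) = 0 := by
  rw [← mul_assoc, rel_cg, smul_mul_assoc, mul_assoc, rel_cc, mul_zero, smul_zero]

theorem caac : gC 𝕜 ξ ν * (gA 𝕜 ξ ν * gA 𝕜 ξ ν * gC 𝕜 ξ ν) = 0 := by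
  rw [mul_assoc, rel_ac, mul_smul_comm, ← mul_assoc (gA 𝕜 ξ ν), rel_ac, smul_mul_assoc,
    mul_smul_comm, mul_smul_comm, mul_assoc, ← mul_assoc, rel_cc, zero_mul, smul_zero, smul_zero]

theorem comm_cx_a (hξ : ξ ^ 2 = -1) : Commute (gC 𝕜 ξ ν * gX 𝕜 ξ ν) (gA 𝕜 ξ ν) := by
  change _ * _ = _ * _
  rw [← mul_assoc (gA 𝕜 ξ ν), rel_ac, smul_mul_assoc, mul_assoc, mul_assoc, rel_ax, mul_sub,
    mul_smul_comm, mul_add, caac, cgc, add_zero, smul_zero, zero_sub, mul_smul_comm, smul_neg,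
    smul_smul, ← pow_two, hξ, neg_smul, one_smul, neg_neg]

theorem aacc : (gA 𝕜 ξ ν * gA 𝕜 ξ ν * gC 𝕜 ξ ν) * gC 𝕜 ξ ν = 0 := by
  rw [mul_assoc, rel_cc, mul_zero]

theorem comm_xc_a (hξ : ξ ^ 2 = -1) : Commute (gX 𝕜 ξ ν * gC 𝕜 ξ ν) (gA 𝕜 ξ ν) := by
  change _ * _ = _ * _
  rw [← mul_assoc (gA 𝕜 ξ ν), rel_ax, sub_mul, smul_mul_assoc, add_mul, aacc,
    mul_assoc (gG 𝕜 ξ ν), rel_cc, mul_zero, add_zero, smul_zero, zero_sub, smul_mul_assoc,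
    mul_assoc, mul_assoc, rel_ac, mul_smul_comm, smul_smul, ← pow_two, hξ, neg_smul, one_smul,
    neg_neg]

/-- The data of the module `V_{i,j}` on `𝕜 × 𝕜`. -/
structure VData (𝕜 : Type) [Field 𝕜] (ξ ν l u κ τ : 𝕜) [Module (DAlg 𝕜 ξ ν) (𝕜 × 𝕜)] : Prop where
  hξ : ξ ^ 2 = -1
  hl : l ^ 4 = 1
  hu : u ^ 4 = 1
  hκ : κ = ν * ξ * (l ^ 3 - l * u)
  hκ0 : κ ≠ 0
  hτ : κ * τ = u ^ 2 - 1
  hr : ∀ (r : 𝕜) (v : 𝕜 × 𝕜), (algebraMap 𝕜 (DAlg 𝕜 ξ ν) r) • v = r • v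
  ha : ∀ v : 𝕜 × 𝕜, gA 𝕜 ξ ν • v = (l * v.1, - (ξ * l) * v.2)
  hc : ∀ v : 𝕜 × 𝕜, gC 𝕜 ξ ν • v = (v.2, 0)
  hg : ∀ v : 𝕜 × 𝕜, gG 𝕜 ξ ν • v = (u * v.1, - u * v.2)
  hx : ∀ v : 𝕜 × 𝕜, gX 𝕜 ξ ν • v = (τ * v.2, κ * v.1)

theorem D_linear {M N : Type} [AddCommGroup M] [AddCommGroup N] [Module (DAlg 𝕜 ξ ν) M]
    [Module (DAlg 𝕜 ξ ν) N] (F : M →+ N)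
    (hr : ∀ (r : 𝕜) m, F (algebraMap 𝕜 (DAlg 𝕜 ξ ν) r • m) = algebraMap 𝕜 (DAlg 𝕜 ξ ν) r • F m)
    (ha : ∀ m, F (gA 𝕜 ξ ν • m) = gA 𝕜 ξ ν • F m)
    (hc : ∀ m, F (gC 𝕜 ξ ν • m) = gC 𝕜 ξ ν • F m)
    (hx : ∀ m, F (gX 𝕜 ξ ν • m) = gX 𝕜 ξ ν • F m)
    (hg : ∀ m, F (gG 𝕜 ξ ν • m) = gG 𝕜 ξ ν • F m) (z : DAlg 𝕜 ξ ν) :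
    ∀ m, F (z • m) = z • F m := by
  refine D_induction (fun z => ∀ m, F (z • m) = z • F m) hr ha hc hx hg ?_ ?_ z
  · intro y z hy hz m
    rw [add_smul, map_add, hy, hz, add_smul]
  · intro y z hy hz m
    rw [mul_smul, hy, hz, mul_smul]

section
variable [Module (DAlg 𝕜 ξ ν) (𝕜 × 𝕜)] {l u κ τ : 𝕜}

theorem VData.smul_smul' (H : VData 𝕜 ξ ν l u κ τ) (r : 𝕜) (z : DAlg 𝕜 ξ ν) (v : 𝕜 × 𝕜) :
    (r • z) • v = r • (z • v) := by
  rw [Algebra.smul_def, mul_smul, H.hr]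

theorem VData.e_one (H : VData 𝕜 ξ ν l u κ τ) (t : 𝕜) :
    eIdem ξ ν l u • ((t, 0) : 𝕜 × 𝕜) = (16 * l ^ 3 * u ^ 3 * t, 0) := by
  simp only [eIdem, mul_smul, add_smul, H.smul_smul', one_smul, H.ha, H.hg, pow_succ, pow_zero,
    one_mul, Prod.smul_mk, smul_eq_mul, Prod.mk_add_mk, Prod.mk.injEq]
  constructor <;> ring

theorem VData.e_two (H : VData 𝕜 ξ ν l u κ τ) (t : 𝕜) :
    eIdem ξ ν (-(ξ * l)) (-u) • ((0, t) : 𝕜 × 𝕜) = (0, 16 * (-(ξ * l)) ^ 3 * (-u) ^ 3 * t) := by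
  simp only [eIdem, mul_smul, add_smul, H.smul_smul', one_smul, H.ha, H.hg, pow_succ, pow_zero,
    one_mul, Prod.smul_mk, smul_eq_mul, Prod.mk_add_mk, Prod.mk.injEq]
  constructor <;> ring

theorem VData.projective [CharZero 𝕜] (H : VData 𝕜 ξ ν l u κ τ) :
    Module.Projective (DAlg 𝕜 ξ ν) (𝕜 × 𝕜) := by
  have hl0 : l ≠ 0 := by rintro rfl; simpa using H.hl
  have hu0 : u ≠ 0 := by rintro rfl; simpa using H.hu
  have hκ0 := H.hκ0
  obtain ⟨w, hw⟩ : ∃ w, w = gC 𝕜 ξ ν * gX 𝕜 ξ ν * eIdem ξ ν l u := ⟨_, rfl⟩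
  have wa : gA 𝕜 ξ ν * w = l • w := by
    rw [hw, ← mul_assoc, ← (comm_cx_a H.hξ).eq, mul_assoc, a_eIdem _ _ H.hl, mul_smul_comm]
  have wg : gG 𝕜 ξ ν * w = u • w := by
    rw [hw, ← mul_assoc, ← comm_cx_g.eq, mul_assoc, g_eIdem _ _ H.hu, mul_smul_comm]
  have wc : gC 𝕜 ξ ν * w = 0 := by
    rw [hw, ← mul_assoc, ← mul_assoc, rel_cc, zero_mul, zero_mul]
  have wxa : gA 𝕜 ξ ν * (gX 𝕜 ξ ν * w) = (-(ξ * l)) • (gX 𝕜 ξ ν * w) := by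
    rw [← mul_assoc, rel_ax, sub_mul, smul_mul_assoc, add_mul, mul_assoc _ _ w, wc,
      mul_assoc _ _ w, wc, smul_mul_assoc, mul_assoc _ _ w, wa]
    simp only [mul_zero, add_zero, smul_zero, zero_sub, mul_smul_comm, smul_smul]
    module
  have wxg : gG 𝕜 ξ ν * (gX 𝕜 ξ ν * w) = (-u) • (gX 𝕜 ξ ν * w) := by
    rw [← mul_assoc, rel_gx, smul_mul_assoc, mul_assoc, wg, mul_smul_comm, smul_smul, neg_one_mul]
  have wxc : gC 𝕜 ξ ν * (gX 𝕜 ξ ν * w) = κ • w := by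
    rw [← mul_assoc, rel_cx, sub_mul, smul_mul_assoc, sub_mul, smul_mul_assoc, pow_succ, pow_two, H.hκ]
    simp only [mul_assoc, wa, wc, wg, mul_smul_comm, mul_zero, smul_zero, sub_zero]
    module
  have wxx : gX 𝕜 ξ ν * (gX 𝕜 ξ ν * w) = (u ^ 2 - 1) • w := by
    rw [← mul_assoc, rel_xx, add_mul, mul_assoc, wg, mul_smul_comm, wg, smul_mul_assoc, one_mul]
    module
  let F : (𝕜 × 𝕜) →+ DAlg 𝕜 ξ ν :=
    { toFun := fun v => v.1 • w + (v.2 * κ⁻¹) • (gX 𝕜 ξ ν * w)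
      map_zero' := by simp
      map_add' := by intro v v'; simp only [Prod.fst_add, Prod.snd_add]; module }
  have hF : ∀ v, F v = v.1 • w + (v.2 * κ⁻¹) • (gX 𝕜 ξ ν * w) := fun _ => rfl
  have hlin := D_linear (𝕜 := 𝕜) F
    (by
      intro r v
      rw [H.hr, hF, hF, smul_eq_mul, ← Algebra.smul_def]
      simp only [Prod.smul_fst, Prod.smul_snd, smul_eq_mul]
      module)
    (by
      intro v
      rw [H.ha, hF, hF, smul_eq_mul, mul_add, mul_smul_comm, mul_smul_comm, wa, wxa]
      module)
    (by
      intro v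
      rw [H.hc, hF, hF, smul_eq_mul, mul_add, mul_smul_comm, mul_smul_comm, wc, wxc, smul_smul,
        mul_assoc, inv_mul_cancel₀ hκ0]
      simp)
    (by
      intro v
      rw [H.hx, hF, hF, smul_eq_mul, mul_add, mul_smul_comm, mul_smul_comm, wxx, ← H.hτ, smul_smul]
      have h1 : κ * v.1 * κ⁻¹ = v.1 := by field_simp
      have h2 : v.2 * κ⁻¹ * (κ * τ) = τ * v.2 := by field_simp
      rw [h1, h2, add_comm])
    (by
      intro v
      rw [H.hg, hF, hF, smul_eq_mul, mul_add, mul_smul_comm, mul_smul_comm, wg, wxg]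
      module)
  let i : (𝕜 × 𝕜) →ₗ[DAlg 𝕜 ξ ν] DAlg 𝕜 ξ ν := { F with map_smul' := hlin }
  obtain ⟨t, ht⟩ : ∃ t, t = (16 * l ^ 3 * u ^ 3 * κ)⁻¹ := ⟨_, rfl⟩
  have hwt : w • ((t, 0) : 𝕜 × 𝕜) = (1, 0) := by
    rw [hw, mul_smul, mul_smul, H.e_one, H.hx, H.hc]
    simp only [ht, Prod.mk.injEq, and_true]
    field_simp
  refine Module.Projective.of_split i (LinearMap.toSpanSingleton _ _ (t, 0)) ?_
  refine LinearMap.ext fun v => ?_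
  change (v.1 • w + (v.2 * κ⁻¹) • (gX 𝕜 ξ ν * w)) • ((t, 0) : 𝕜 × 𝕜) = v
  rw [add_smul, H.smul_smul', H.smul_smul', mul_smul (gX 𝕜 ξ ν), hwt, H.hx]
  ext <;> simp [hκ0]

theorem VData.injective [CharZero 𝕜] (H : VData 𝕜 ξ ν l u κ τ) :
    Module.Injective (DAlg 𝕜 ξ ν) (𝕜 × 𝕜) := by
  have hl0 : l ≠ 0 := by rintro rfl; simpa using H.hl
  have hu0 : u ≠ 0 := by rintro rfl; simpa using H.hu
  have hξ0 : ξ ≠ 0 := by rintro rfl; simpa using H.hξ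
  have hξ := H.hξ
  have hκ0 := H.hκ0
  have hl' : (-(ξ * l)) ^ 4 = 1 := by
    have h1 : (-(ξ * l)) ^ 4 = (ξ ^ 2) ^ 2 * l ^ 4 := by ring
    rw [h1, H.hξ, H.hl]; ring
  have hu' : (-u) ^ 4 = 1 := by
    have h1 : (-u) ^ 4 = u ^ 4 := by ring
    rw [h1, H.hu]
  obtain ⟨w, hw⟩ : ∃ w, w = eIdem ξ ν (-(ξ * l)) (-u) * (gX 𝕜 ξ ν * gC 𝕜 ξ ν) := ⟨_, rfl⟩
  have wa : w * gA 𝕜 ξ ν = (-(ξ * l)) • w := by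
    rw [hw, mul_assoc, (comm_xc_a H.hξ).eq, ← mul_assoc, eIdem_a _ _ hl', smul_mul_assoc]
  have wg : w * gG 𝕜 ξ ν = (-u) • w := by
    rw [hw, mul_assoc, comm_xc_g.eq, ← mul_assoc, eIdem_g _ _ hu', smul_mul_assoc]
  have wc : w * gC 𝕜 ξ ν = 0 := by
    rw [hw, mul_assoc, mul_assoc, rel_cc, mul_zero, mul_zero]
  have wxa : w * gX 𝕜 ξ ν * gA 𝕜 ξ ν = l • (w * gX 𝕜 ξ ν) := by
    have h := congrArg (fun z => w * z) (rel_ax (𝕜 := 𝕜) (ξ := ξ) (ν := ν))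
    simp only [mul_sub, mul_add, mul_smul_comm, ← mul_assoc, wa, wg, smul_mul_assoc, wc,
      smul_zero, add_zero, zero_sub] at h
    have h2 : w * gX 𝕜 ξ ν * gA 𝕜 ξ ν = ξ • (-(ξ • (w * gX 𝕜 ξ ν * gA 𝕜 ξ ν))) := by
      rw [smul_neg, smul_smul, ← pow_two, H.hξ]; simp
    rw [h2, ← h, smul_smul]
    congr 1
    linear_combination (-l) * H.hξ
  have wxg : w * gX 𝕜 ξ ν * gG 𝕜 ξ ν = u • (w * gX 𝕜 ξ ν) := by
    have h1 : gX 𝕜 ξ ν * gG 𝕜 ξ ν = (-1 : 𝕜) • (gG 𝕜 ξ ν * gX 𝕜 ξ ν) := by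
      rw [rel_gx, smul_smul, neg_one_mul, neg_neg, one_smul]
    rw [mul_assoc, h1, mul_smul_comm, ← mul_assoc, wg, smul_mul_assoc, smul_smul, neg_one_mul, neg_neg]
  have wxc : w * gX 𝕜 ξ ν * gC 𝕜 ξ ν = κ • w := by
    have h := congrArg (fun z => w * z) (rel_cx (𝕜 := 𝕜) (ξ := ξ) (ν := ν))
    simp only [mul_sub, mul_add, mul_smul_comm, ← mul_assoc, wa, wg, smul_mul_assoc, wc, pow_succ,
      pow_zero, one_mul, zero_mul] at h
    have h2 : ξ • (w * gX 𝕜 ξ ν * gC 𝕜 ξ ν) = ξ • (κ • w) := by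
      rw [← sub_eq_zero.mp h.symm, H.hκ]
      simp only [smul_smul, ← sub_smul]
      congr 1
      linear_combination (-ν * ξ ^ 2 * l ^ 3) * H.hξ
    exact smul_right_injective _ hξ0 h2
  have wxx : w * gX 𝕜 ξ ν * gX 𝕜 ξ ν = (u ^ 2 - 1) • w := by
    rw [mul_assoc, rel_xx, mul_add, ← mul_assoc, wg, smul_mul_assoc, wg, mul_smul_comm, mul_one]
    module
  refine ⟨fun X Y _ _ _ _ f hf p => ?_⟩
  letI : Module 𝕜 X := Module.compHom X (algebraMap 𝕜 (DAlg 𝕜 ξ ν))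
  letI : Module 𝕜 Y := Module.compHom Y (algebraMap 𝕜 (DAlg 𝕜 ξ ν))
  have hX : ∀ (r : 𝕜) (y : X), r • y = algebraMap 𝕜 (DAlg 𝕜 ξ ν) r • y := fun _ _ => rfl
  have hY : ∀ (r : 𝕜) (y : Y), r • y = algebraMap 𝕜 (DAlg 𝕜 ξ ν) r • y := fun _ _ => rfl
  let f' : X →ₗ[𝕜] Y :=
    { toFun := f, map_add' := map_add f, map_smul' := fun r y => by simp [hX, hY] }
  obtain ⟨q, hq⟩ := f'.exists_leftInverse_of_injective (LinearMap.ker_eq_bot.mpr hf)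
  have hq' : ∀ y, q (f y) = y := fun y => LinearMap.congr_fun hq y
  let ψ : Y →+ 𝕜 :=
    { toFun := fun y => (p (q y)).2, map_zero' := by simp, map_add' := by simp }
  have hψ : ∀ (r : 𝕜) y, ψ (algebraMap 𝕜 (DAlg 𝕜 ξ ν) r • y) = r * ψ y := by
    intro r y
    change (p (q (r • y))).2 = r * (p (q y)).2
    rw [map_smul, hX, map_smul, H.hr]; simp
  have hψ' : ∀ (r : 𝕜) (z : DAlg 𝕜 ξ ν) y, ψ ((r • z) • y) = r * ψ (z • y) := by
    intro r z y
    rw [Algebra.smul_def, mul_smul, hψ]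
  have hψf : ∀ y, ψ (f y) = (p y).2 := fun y => by
    change (p (q (f y))).2 = _
    rw [hq']
  obtain ⟨t, ht⟩ : ∃ t, t = (16 * (-(ξ * l)) ^ 3 * (-u) ^ 3 * κ)⁻¹ := ⟨_, rfl⟩
  let F : Y →+ (𝕜 × 𝕜) :=
    { toFun := fun y => (t * κ⁻¹ * ψ ((w * gX 𝕜 ξ ν) • y), t * ψ (w • y))
      map_zero' := by simp
      map_add' := by intro y y'; simp [mul_add] }
  have hF : ∀ y, F y = (t * κ⁻¹ * ψ ((w * gX 𝕜 ξ ν) • y), t * ψ (w • y)) := fun _ => rfl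
  have hlin := D_linear (𝕜 := 𝕜) F
    (by
      intro r v
      rw [H.hr, hF, hF, smul_smul, smul_smul, ← Algebra.commutes, ← Algebra.commutes,
        ← Algebra.smul_def, ← Algebra.smul_def, hψ', hψ']
      ext <;> simp <;> ring)
    (by
      intro v
      rw [H.ha, hF, hF, smul_smul, smul_smul, wa, wxa, hψ', hψ']
      ext <;> simp <;> ring)
    (by
      intro v
      rw [H.hc, hF, hF, smul_smul, smul_smul, wc, wxc, hψ']
      ext <;> simp
      field_simp)
    (by
      intro v
      rw [H.hx, hF, hF, smul_smul, smul_smul, wxx, hψ', ← H.hτ]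
      ext <;> simp <;> field_simp)
    (by
      intro v
      rw [H.hg, hF, hF, smul_smul, smul_smul, wg, wxg, hψ', hψ']
      ext <;> simp <;> ring)
  refine ⟨{ F with map_smul' := hlin }, fun y => ?_⟩
  change F (f y) = p y
  have key : ∀ v : 𝕜 × 𝕜, t * (w • v).2 = v.2 := by
    intro v
    rw [hw, mul_smul, mul_smul, H.hc, H.hx]
    simp only [mul_zero]
    rw [H.e_two, ht]
    field_simp
  rw [hF, ← map_smul, ← map_smul, hψf, hψf, map_smul, map_smul, key, mul_smul, mul_comm t,
    mul_assoc, key, H.hx]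
  ext <;> simp [hκ0]

end

theorem VData.of_Vij [CharZero 𝕜] (hξ : IsPrimitiveRoot ξ 4) (hν : ν ^ 2 = 2) (i j : ZMod 4)
    (hij : 2 * i ≠ j) (ρ : DAlg 𝕜 ξ ν →ₐ[𝕜] Module.End 𝕜 (𝕜 × 𝕜))
    (hρ : VijOn ρ i j ((1 : 𝕜), (0 : 𝕜)) ((0 : 𝕜), (1 : 𝕜))) :
    letI : Module (DAlg 𝕜 ξ ν) (𝕜 × 𝕜) := Module.compHom (𝕜 × 𝕜) ρ.toRingHom
    VData 𝕜 ξ ν (ξ ^ i.val) (ξ ^ j.val) (ν * ξ * (ξ ^ (3 * i.val) - ξ ^ (i.val + j.val)))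
      (ν * ξ / 2 * (ξ ^ i.val + ξ ^ (3 * i.val + j.val))) := by
  letI : Module (DAlg 𝕜 ξ ν) (𝕜 × 𝕜) := Module.compHom (𝕜 × 𝕜) ρ.toRingHom
  have hs : ∀ (z : DAlg 𝕜 ξ ν) (v : 𝕜 × 𝕜), z • v = ρ z v := fun _ _ => rfl
  have h2 : ξ ^ 2 = -1 := by
    have h := hξ.pow_eq_one
    have hne : ξ ^ 2 ≠ 1 := hξ.pow_ne_one_of_pos_of_lt (by norm_num) (by norm_num)
    have h3 : (ξ ^ 2 - 1) * (ξ ^ 2 + 1) = 0 := by linear_combination h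
    rcases mul_eq_zero.mp h3 with h4 | h4
    · exact absurd (sub_eq_zero.mp h4) hne
    · exact eq_neg_of_add_eq_zero_left h4
  have h4 : ∀ n : ℕ, (ξ ^ n) ^ 4 = 1 := fun n => by
    rw [← pow_mul, mul_comm, pow_mul, hξ.pow_eq_one, one_pow]
  have hξ0 : ξ ≠ 0 := hξ.ne_zero (by norm_num)
  have hν0 : ν ≠ 0 := by rintro rfl; norm_num at hν
  have hdec : ∀ v : 𝕜 × 𝕜, v = v.1 • ((1 : 𝕜), (0 : 𝕜)) + v.2 • ((0 : 𝕜), (1 : 𝕜)) := by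
    intro v; ext <;> simp
  obtain ⟨a1, a2, -, -, c1, c2, -, -, g1, g2, x1, x2⟩ := hρ
  have ev : ∀ (z : DAlg 𝕜 ξ ν) (v : 𝕜 × 𝕜),
      z • v = v.1 • ρ z ((1 : 𝕜), (0 : 𝕜)) + v.2 • ρ z ((0 : 𝕜), (1 : 𝕜)) := by
    intro z v
    rw [hs, ← map_smul, ← map_smul, ← map_add, ← hdec]
  refine ⟨h2, h4 _, h4 _, ?_, ?_, ?_, ?_, ?_, ?_, ?_, ?_⟩
  · ring
  · refine mul_ne_zero (mul_ne_zero hν0 hξ0) (sub_ne_zero.mpr fun h => ?_)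
    rw [(isOfFinOrder_iff_pow_eq_one.mpr ⟨4, by norm_num, hξ.pow_eq_one⟩).pow_eq_pow_iff_modEq, ← hξ.eq_orderOf, ← ZMod.natCast_eq_natCast_iff] at h
    push_cast at h
    rw [ZMod.natCast_zmod_val, ZMod.natCast_zmod_val] at h
    apply hij
    linear_combination h
  · have e1 := h4 i.val
    have e2 : (ξ ^ i.val) ^ 2 * (ξ ^ i.val) ^ 2 = 1 := by rw [← e1]; ring
    rw [pow_mul', pow_add, pow_add, pow_mul']
    generalize ξ ^ i.val = l at *
    generalize ξ ^ j.val = u at *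
    linear_combination (ξ ^ 2 / 2 * (l ^ 4 - l ^ 4 * u ^ 2 + (l ^ 6 - l ^ 2) * u)) * hν
      + (l ^ 4 - l ^ 4 * u ^ 2 + (l ^ 6 - l ^ 2) * u) * h2
      + (-1 + u ^ 2 - l ^ 2 * u) * e1
  · intro r v
    rw [hs, AlgHom.commutes]; rfl
  · intro v
    rw [ev, a1, a2]
    ext <;> simp
    · ring
    · have : ξ ^ 3 = -ξ := by linear_combination ξ * h2
      rw [pow_add, this]; ring
  · intro v
    rw [ev, c1, c2]
    ext <;> simp
  · intro v
    rw [ev, g1, g2]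
    ext <;> simp
    · ring
    · rw [pow_add, h2]; ring
  · intro v
    rw [ev, x1, x2]
    ext <;> simp <;> ring

theorem repModuleCat_projective [CharZero 𝕜] (hξ : IsPrimitiveRoot ξ 4) (hν : ν ^ 2 = 2)
    (i j : ZMod 4) (hij : 2 * i ≠ j) (ρ : DAlg 𝕜 ξ ν →ₐ[𝕜] Module.End 𝕜 (𝕜 × 𝕜))
    (hρ : VijOn ρ i j ((1 : 𝕜), (0 : 𝕜)) ((0 : 𝕜), (1 : 𝕜))) :
    CategoryTheory.Projective (repModuleCat ρ) := by
  letI : Module (DAlg 𝕜 ξ ν) (𝕜 × 𝕜) := Module.compHom (𝕜 × 𝕜) ρ.toRingHom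
  exact (IsProjective.iff_projective (R := DAlg 𝕜 ξ ν) (𝕜 × 𝕜)).mp
    (VData.of_Vij hξ hν i j hij ρ hρ).projective

theorem repModuleCat_injective [CharZero 𝕜] (hξ : IsPrimitiveRoot ξ 4) (hν : ν ^ 2 = 2)
    (i j : ZMod 4) (hij : 2 * i ≠ j) (ρ : DAlg 𝕜 ξ ν →ₐ[𝕜] Module.End 𝕜 (𝕜 × 𝕜))
    (hρ : VijOn ρ i j ((1 : 𝕜), (0 : 𝕜)) ((0 : 𝕜), (1 : 𝕜))) :
    CategoryTheory.Injective (repModuleCat ρ) := by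
  letI : Module (DAlg 𝕜 ξ ν) (𝕜 × 𝕜) := Module.compHom (𝕜 × 𝕜) ρ.toRingHom
  exact (Module.injective_iff_injective_object (DAlg 𝕜 ξ ν) (𝕜 × 𝕜)).mp
    (VData.of_Vij hξ hν i j hij ρ hρ).injective

end ExtVanishing

open CategoryTheory in
/-- For all `(i,j), (k,ℓ) ∈ Λ` and all `m ∈ ℤ/4`, the Ext groups
`Ext¹_D(V_{i,j}, V_{k,ℓ})`, `Ext¹_D(V_{i,j}, 𝕜_{χ^m})` and `Ext¹_D(𝕜_{χ^m}, V_{i,j})`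
all vanish. -/
theorem stmt_16 (𝕜 : Type) [Field 𝕜] [IsAlgClosed 𝕜] [CharZero 𝕜]
    (ξ ν : 𝕜) (hξ : IsPrimitiveRoot ξ 4) (hν : ν ^ 2 = 2)
    (i j i' j' : ZMod 4) (hij : 2 * i ≠ j) (hij' : 2 * i' ≠ j') (m : ZMod 4)
    (ρ ρ' : DAlg 𝕜 ξ ν →ₐ[𝕜] Module.End 𝕜 (𝕜 × 𝕜))
    (hρ : VijOn ρ i j ((1 : 𝕜), (0 : 𝕜)) ((0 : 𝕜), (1 : 𝕜)))
    (hρ' : VijOn ρ' i' j' ((1 : 𝕜), (0 : 𝕜)) ((0 : 𝕜), (1 : 𝕜)))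
    (f : DAlg 𝕜 ξ ν →ₐ[𝕜] 𝕜) (hf : IsChi 𝕜 ξ ν f m) :
    Subsingleton (((Ext 𝕜 (ModuleCat (DAlg 𝕜 ξ ν)) 1).obj
        (Opposite.op (repModuleCat ρ))).obj (repModuleCat ρ')) ∧
    Subsingleton (((Ext 𝕜 (ModuleCat (DAlg 𝕜 ξ ν)) 1).obj
        (Opposite.op (repModuleCat ρ))).obj (chiModuleCat 𝕜 ξ ν f)) ∧
    Subsingleton (((Ext 𝕜 (ModuleCat (DAlg 𝕜 ξ ν)) 1).obj
        (Opposite.op (chiModuleCat 𝕜 ξ ν f))).obj (repModuleCat ρ')) := by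
  have h1 := repModuleCat_projective hξ hν i j hij ρ hρ
  have h2 := repModuleCat_injective hξ hν i' j' hij' ρ' hρ'
  exact ⟨ModuleCat.subsingleton_of_isZero (isZero_Ext_succ_of_projective _ _ 0),
    ModuleCat.subsingleton_of_isZero (isZero_Ext_succ_of_projective _ _ 0),
    ModuleCat.subsingleton_of_isZero (isZero_Ext_succ_of_injective_aux _ _ 0)⟩
end
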